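/- arXiv:2210.00785 — 8 statements merged into one kernel-verified Lean document; each statement's English description precedes it below -/
import Mathlib

section
/- Let χ = t₁⋯t_m be a cycle with start state p in a continuous VASS of dimension d, and let x ∈ ℚ^d. Then p(0) ⇢^{χ^k} p(x) for some k ∈ ℕ if and only if x = 0 or there exist rationals a₁,…,a_m with a_i > 0 for all i and x = ∑_{i=1}^m a_i • ℓ(t_i). (Theorem 1 combined with Lemma 2, stated in coefficient form: Reach(χ*) equals {0} together with all strictly positive rational combinations of the labels occurring along χ.) -/
open Pointwise

/-- A continuous VASS of dimension `d`: a finite set of states `Q`,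
a finite set of transitions `T ⊆ Q × Q`, and a labelling of transitions
by vectors in `ℚ^d`. -/
structure CVASS (d : ℕ) where
  Q : Type
  [deceq : DecidableEq Q]
  [fin : Fintype Q]
  T : Finset (Q × Q)
  label : Q × Q → (Fin d → ℚ)

attribute [instance] CVASS.deceq CVASS.fin

namespace CVASS

variable {d : ℕ} (V : CVASS d)

/-- `V.PathFrom p π q` : the list of transitions `π` is a valid path of `V`
from state `p` to state `q`. -/
inductive PathFrom : V.Q → List (V.Q × V.Q) → V.Q → Prop
  | nil (p : V.Q) : PathFrom p [] p
  | cons {p q r : V.Q} {rest : List (V.Q × V.Q)} :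
      (p, q) ∈ V.T → PathFrom q rest r → PathFrom p ((p, q) :: rest) r

/-- `V.RunFrom p x π q y` : there is a run of `V` lifted from the path `π`,
starting in configuration `p(x)` and ending in configuration `q(y)`, where
each transition is scaled by some rational coefficient in `(0,1]`
(ℚ-semantics: counters may become negative). -/
inductive RunFrom : V.Q → (Fin d → ℚ) → List (V.Q × V.Q) → V.Q → (Fin d → ℚ) → Prop
  | nil (p : V.Q) (x : Fin d → ℚ) : RunFrom p x [] p x
  | cons {p q r : V.Q} {x y : Fin d → ℚ} {α : ℚ} {rest : List (V.Q × V.Q)} :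
      (p, q) ∈ V.T → 0 < α → α ≤ 1 →
      RunFrom q (x + α • V.label (p, q)) rest r y →
      RunFrom p x ((p, q) :: rest) r y

/-- `V.NNRunFrom p x π q y` : as `RunFrom`, but every configuration along the
run (including the first and the last one) must have nonnegative counters
(ℚ≥0-semantics). -/
inductive NNRunFrom : V.Q → (Fin d → ℚ) → List (V.Q × V.Q) → V.Q → (Fin d → ℚ) → Prop
  | nil (p : V.Q) (x : Fin d → ℚ) : (∀ i, 0 ≤ x i) → NNRunFrom p x [] p x
  | cons {p q r : V.Q} {x y : Fin d → ℚ} {α : ℚ} {rest : List (V.Q × V.Q)} :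
      (p, q) ∈ V.T → (∀ i, 0 ≤ x i) → 0 < α → α ≤ 1 →
      NNRunFrom q (x + α • V.label (p, q)) rest r y →
      NNRunFrom p x ((p, q) :: rest) r y

end CVASS

/-- The list of states visited by a path `π` starting at state `p`. -/
def pathStates {Q : Type} (p : Q) (π : List (Q × Q)) : List Q :=
  p :: π.map Prod.snd

/-- A path is simple if it visits no state twice. -/
def SimplePath {Q : Type} (p : Q) (π : List (Q × Q)) : Prop :=
  (pathStates p π).Nodup

/-- A cycle is simple if it is nonempty and visits no state twice, except
that its first state equals its last state. -/
def SimpleCycle {Q : Type} (π : List (Q × Q)) : Prop :=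
  π ≠ [] ∧ (π.map Prod.snd).Nodup

/-- The path `π₀ χ₁^{k₁} π₁ ⋯ χₙ^{kₙ} πₙ` determined by a linear path scheme
`π₀ χ₁* π₁ ⋯ χₙ* πₙ` (given by the paths `πs` and the cycles `χs`) and
exponents `ks`. -/
def lpsConcat {Q : Type} {n : ℕ} (πs : Fin (n + 1) → List (Q × Q))
    (χs : Fin n → List (Q × Q)) (ks : Fin n → ℕ) : List (Q × Q) :=
  πs 0 ++ (List.ofFn fun i : Fin n =>
    (List.replicate (ks i) (χs i)).flatten ++ πs i.succ).flatten


theorem run_coeffs {d : ℕ} (V : CVASS d) {p q : V.Q} {x y : Fin d → ℚ}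
    {π : List (V.Q × V.Q)} (h : V.RunFrom p x π q y) :
    ∃ a : Fin π.length → ℚ, (∀ i, 0 < a i) ∧ y = x + ∑ i, a i • V.label (π.get i) := by
  induction h with
  | nil p x => exact ⟨fun _ => 1, fun _ => one_pos, by simp⟩
  | @cons p q r x y α rest hT h0 h1 _ ih =>
    obtain ⟨a, ha, hy⟩ := ih
    refine ⟨(Fin.cons α a : Fin (rest.length + 1) → ℚ), fun i => ?_, ?_⟩
    · refine Fin.cases ?_ (fun j => ?_) (i : Fin (rest.length + 1))
      · simpa using h0
      · simpa using ha j
    · rw [hy]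
      erw [Fin.sum_univ_succ]
      simp [add_assoc]

theorem run_of_coeffs {d : ℕ} (V : CVASS d) {p q : V.Q}
    {π : List (V.Q × V.Q)} (h : V.PathFrom p π q) :
    ∀ (x : Fin d → ℚ) (a : Fin π.length → ℚ), (∀ i, 0 < a i) → (∀ i, a i ≤ 1) →
      V.RunFrom p x π q (x + ∑ i, a i • V.label (π.get i)) := by
  induction h with
  | nil p => intro x a _ _; simpa using CVASS.RunFrom.nil p x
  | @cons p q r rest hT _ ih =>
    intro x a h0 h1
    refine CVASS.RunFrom.cons hT (h0 ⟨0, by simp⟩) (h1 ⟨0, by simp⟩) ?_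
    have := ih (x + a ⟨0, by simp⟩ • V.label (p, q)) (fun i => a i.succ)
      (fun i => h0 _) (fun i => h1 _)
    convert this using 1
    erw [Fin.sum_univ_succ]
    simp [add_assoc]

theorem run_append {d : ℕ} (V : CVASS d) {p q r : V.Q} {x y z : Fin d → ℚ}
    {π σ : List (V.Q × V.Q)} (h : V.RunFrom p x π q y) (h' : V.RunFrom q y σ r z) :
    V.RunFrom p x (π ++ σ) r z := by
  induction h with
  | nil p x => exact h'
  | cons hT h0 h1 _ ih => exact CVASS.RunFrom.cons hT h0 h1 (ih h')

theorem run_split {d : ℕ} (V : CVASS d) {p q r : V.Q} {π : List (V.Q × V.Q)}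
    (hp : V.PathFrom p π q) : ∀ {x z : Fin d → ℚ} {σ : List (V.Q × V.Q)},
    V.RunFrom p x (π ++ σ) r z → ∃ y, V.RunFrom p x π q y ∧ V.RunFrom q y σ r z := by
  induction hp with
  | nil p => intro x z σ h; exact ⟨x, .nil _ _, h⟩
  | cons hT _ ih =>
    intro x z σ h
    cases h with
    | cons hT h0 h1 h =>
      obtain ⟨y, h2, h3⟩ := ih h
      exact ⟨y, .cons hT h0 h1 h2, h3⟩

theorem iter_coeffs {d : ℕ} (V : CVASS d) {p : V.Q} {χ : List (V.Q × V.Q)}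
    (hcyc : V.PathFrom p χ p) (k : ℕ) : ∀ x y : Fin d → ℚ,
    V.RunFrom p x ((List.replicate (k + 1) χ).flatten) p y →
    ∃ a : Fin χ.length → ℚ, (∀ i, 0 < a i) ∧ y = x + ∑ i, a i • V.label (χ.get i) := by
  induction k with
  | zero => intro x y h; exact run_coeffs V (by simpa using h)
  | succ k ih =>
    intro x y h
    rw [List.replicate_succ, List.flatten_cons] at h
    obtain ⟨z, h1, h2⟩ := run_split V hcyc h
    obtain ⟨a, ha, e1⟩ := run_coeffs V h1
    obtain ⟨b, hb, e2⟩ := ih _ _ h2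
    refine ⟨fun i => a i + b i, fun i => add_pos (ha i) (hb i), ?_⟩
    simp only [add_smul, Finset.sum_add_distrib]
    rw [e2, e1, add_assoc]

theorem iter_run {d : ℕ} (V : CVASS d) {p : V.Q} {χ : List (V.Q × V.Q)} (v : Fin d → ℚ)
    (h : ∀ x, V.RunFrom p x χ p (x + v)) (k : ℕ) : ∀ x : Fin d → ℚ,
    V.RunFrom p x ((List.replicate k χ).flatten) p (x + (k : ℚ) • v) := by
  induction k with
  | zero => intro x; simpa using CVASS.RunFrom.nil p x
  | succ k ih =>
    intro x
    rw [List.replicate_succ, List.flatten_cons]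
    have := run_append V (h x) (ih (x + v))
    convert this using 1
    push_cast
    rw [add_smul, one_smul]; abel

theorem cycle_reach_iff_pos_combination {d : ℕ} (V : CVASS d) (p : V.Q)
    (χ : List (V.Q × V.Q)) (hne : χ ≠ []) (hcyc : V.PathFrom p χ p)
    (x : Fin d → ℚ) :
    (∃ k : ℕ, V.RunFrom p 0 ((List.replicate k χ).flatten) p x) ↔
      (x = 0 ∨ ∃ a : Fin χ.length → ℚ, (∀ i, 0 < a i) ∧
        x = ∑ i, a i • V.label (χ.get i)) := by
  constructor
  · rintro ⟨k, h⟩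
    cases k with
    | zero =>
      left
      obtain ⟨a, _, e⟩ := run_coeffs V h
      rw [e]
      exact (zero_add _).trans (Finset.sum_eq_zero (fun i _ => i.elim0))
    | succ k =>
      right
      simpa using iter_coeffs V hcyc k _ _ h
  · rintro (rfl | ⟨a, ha, rfl⟩)
    · exact ⟨0, CVASS.RunFrom.nil p 0⟩
    · obtain ⟨n, hn⟩ := exists_nat_gt (∑ i, a i)
      have hn0 : (0 : ℚ) < n := lt_of_le_of_lt (Finset.sum_nonneg fun i _ => (ha i).le) hn
      refine ⟨n, ?_⟩
      have := iter_run V (∑ i, (a i / n) • V.label (χ.get i))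
        (fun x => run_of_coeffs V hcyc x (fun i => a i / n) (fun i => div_pos (ha i) hn0)
          (fun i => (div_le_one hn0).2
            ((Finset.single_le_sum (fun j _ => (ha j).le) (Finset.mem_univ i)).trans hn.le))) n 0
      convert this using 1
      rw [zero_add, Finset.smul_sum]
      refine Finset.sum_congr rfl fun i _ => ?_
      rw [smul_smul, mul_div_cancel₀ _ hn0.ne']
end

section
/- Let G ⊆ ℝ² be a finite nonempty set, C = cone(G), and P = pos(G) the set of strictly positive combinations of the elements of G. If there exists v ∈ ℝ² such that C ⊆ {r • v | r ∈ ℝ} (C is trivial), then P ∪ {0} = C. Otherwise (C is nontrivial, i.e. not contained in any line through the origin), P equals the topological interior of C. (Corollary 1, dimension 2.) -/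
/-- Corollary 1, dimension 2. Let `G ⊆ ℝ²` be a finite
nonempty set, `C = cone(G)` its cone of nonnegative combinations and
`P = pos(G)` its set of strictly positive combinations. If `C` is contained
in a line `{r • v | r ∈ ℝ}` (trivial case), then `P ∪ {0} = C`; otherwise
`P` equals the topological interior of `C`. -/
theorem dim2_cone_cases (G : Finset (Fin 2 → ℝ)) (hG : G.Nonempty)
    (C P : Set (Fin 2 → ℝ))
    (hC : C = {x | ∃ a : (Fin 2 → ℝ) → ℝ, (∀ v ∈ G, 0 ≤ a v) ∧
      x = ∑ v ∈ G, a v • v})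
    (hP : P = {x | ∃ a : (Fin 2 → ℝ) → ℝ, (∀ v ∈ G, 0 < a v) ∧
      x = ∑ v ∈ G, a v • v}) :
    ((∃ v : Fin 2 → ℝ, C ⊆ {x | ∃ r : ℝ, x = r • v}) → P ∪ {0} = C) ∧
    (¬ (∃ v : Fin 2 → ℝ, C ⊆ {x | ∃ r : ℝ, x = r • v}) → P = interior C) := by
  have hPC : P ⊆ C := by
    rw [hP, hC]
    rintro x ⟨a, ha, rfl⟩
    exact ⟨a, fun v hv => (ha v hv).le, rfl⟩
  have hGC : ∀ u ∈ G, u ∈ C := by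
    intro u hu
    rw [hC]
    refine ⟨fun v => if v = u then 1 else 0, fun v _ => by dsimp only; split_ifs <;> norm_num, ?_⟩
    simp [ite_smul, hu]
  constructor
  · rintro ⟨w, hw⟩
    apply Set.Subset.antisymm
    · apply Set.union_subset hPC
      rintro x hx
      rw [Set.mem_singleton_iff] at hx
      rw [hC, hx]
      exact ⟨0, by simp, by simp⟩
    · intro x hx
      by_cases hx0 : x = 0
      · right; exact hx0
      left
      have hc : ∀ v, ∃ r : ℝ, v ∈ G → v = r • w := by
        intro v
        by_cases hv : v ∈ G
        · obtain ⟨r, hr⟩ := hw (hGC v hv)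
          exact ⟨r, fun _ => hr⟩
        · exact ⟨0, fun h => absurd h hv⟩
      choose c hc using hc
      have key : ∀ b : (Fin 2 → ℝ) → ℝ, ∑ v ∈ G, b v • v = (∑ v ∈ G, b v * c v) • w := by
        intro b
        rw [Finset.sum_smul]
        refine Finset.sum_congr rfl fun v hv => ?_
        rw [← smul_smul, ← hc v hv]
      rw [hC] at hx
      obtain ⟨a, ha, hxa⟩ := hx
      rw [key] at hxa
      set t := ∑ v ∈ G, a v * c v with ht
      have ht0 : t ≠ 0 := by
        intro h
        apply hx0
        rw [hxa, h, zero_smul]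
      have hu : ∃ u ∈ G, 0 < c u * t := by
        by_contra! h
        have h1 : t * t ≤ 0 := by
          conv_lhs => rw [ht, Finset.sum_mul]
          apply Finset.sum_nonpos
          intro v hv
          rw [← ht, mul_assoc]
          exact mul_nonpos_of_nonneg_of_nonpos (ha v hv) (h v hv)
        exact absurd h1 (not_le.mpr (mul_self_pos.mpr ht0))
      obtain ⟨u, huG, hu⟩ := hu
      set S := ∑ v ∈ G, c v with hS
      obtain ⟨e, he, het⟩ : ∃ e : ℝ, 0 < e ∧ 0 < (t - e * S) * t := by
        have hcont : Filter.Tendsto (fun e : ℝ => (t - e * S) * t) (nhdsWithin 0 (Set.Ioi 0))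
            (nhds ((t - 0 * S) * t)) := by
          apply Filter.Tendsto.mono_left _ nhdsWithin_le_nhds
          exact Continuous.tendsto (f := fun e : ℝ => (t - e * S) * t) (by fun_prop) 0
        have hpos : 0 < (t - 0 * S) * t := by
          rw [zero_mul, sub_zero]; exact mul_self_pos.mpr ht0
        obtain ⟨e, h1, h2⟩ := ((hcont.eventually (lt_mem_nhds hpos)).and
          (self_mem_nhdsWithin)).exists
        exact ⟨e, h2, h1⟩
      have hcu : c u ≠ 0 := by
        intro h; rw [h] at hu; simp at hu
      have hd : 0 < (t - e * S) / c u := by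
        have h1 : (t - e * S) / c u = ((t - e * S) * t) / (c u * t) := by field_simp
        rw [h1]; exact div_pos het hu
      rw [hP]
      refine ⟨fun v => e + if v = u then (t - e * S) / c u else 0, ?_, ?_⟩
      · intro v _
        dsimp only
        split_ifs
        · exact add_pos he hd
        · simpa using he
      · rw [key, hxa]
        congr 1
        simp only [add_mul, ite_mul, zero_mul, Finset.sum_add_distrib, ← Finset.mul_sum,
          Finset.sum_ite_eq', huG, if_true]
        rw [← hS]
        field_simp
        ring
  · intro hnt
    apply Set.Subset.antisymm
    · apply interior_maximal hPC
      let L := Fintype.linearCombination ℝ (fun v : G => (v : Fin 2 → ℝ))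
      have hL : Function.Surjective L := by
        rw [← LinearMap.range_eq_top, Fintype.range_linearCombination]
        by_contra hne
        apply hnt
        have hlt := Submodule.finrank_lt hne
        rw [Module.finrank_fin_fun] at hlt
        obtain ⟨w, hw⟩ := finrank_le_one_iff.mp (Nat.lt_succ_iff.mp hlt)
        refine ⟨w, ?_⟩
        rw [hC]
        rintro x ⟨a, -, rfl⟩
        have hm : ∑ v ∈ G, a v • v ∈
            Submodule.span ℝ (Set.range fun v : G => (v : Fin 2 → ℝ)) := by
          refine Submodule.sum_mem _ fun v hv => Submodule.smul_mem _ _ ?_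
          exact Submodule.subset_span ⟨⟨v, hv⟩, rfl⟩
        obtain ⟨r, hr⟩ := hw ⟨_, hm⟩
        exact ⟨r, by simpa using (congrArg Subtype.val hr).symm⟩
      have hopen : IsOpenMap L := LinearMap.isOpenMap_of_finiteDimensional L hL
      have hPL : P = L '' (Set.univ.pi fun _ => Set.Ioi 0) := by
        rw [hP]
        ext x
        constructor
        · rintro ⟨a, ha, rfl⟩
          refine ⟨fun v => a v, fun v _ => ha v v.2, ?_⟩
          simp only [L, Fintype.linearCombination_apply]
          exact Finset.sum_coe_sort G (fun v => a v • v)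
        · rintro ⟨b, hb, rfl⟩
          refine ⟨fun v => if h : v ∈ G then b ⟨v, h⟩ else 0, ?_, ?_⟩
          · intro v hv
            simp only [hv, dif_pos]
            exact hb ⟨v, hv⟩ trivial
          · simp only [L, Fintype.linearCombination_apply]
            rw [← Finset.sum_coe_sort G]
            simp
      rw [hPL]
      exact hopen _ (isOpen_set_pi Set.finite_univ fun _ _ => isOpen_Ioi)
    · intro x hx
      have hcont : Filter.Tendsto (fun e : ℝ => x - e • ∑ v ∈ G, v) (nhdsWithin 0 (Set.Ioi 0))
          (nhds (x - (0 : ℝ) • ∑ v ∈ G, v)) := by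
        apply Filter.Tendsto.mono_left _ nhdsWithin_le_nhds
        exact Continuous.tendsto (f := fun e : ℝ => x - e • ∑ v ∈ G, v) (by fun_prop) 0
      rw [zero_smul, sub_zero] at hcont
      obtain ⟨e, h1, h2⟩ := ((hcont.eventually (mem_interior_iff_mem_nhds.mp hx)).and
        (self_mem_nhdsWithin)).exists
      have h1' : x - e • ∑ v ∈ G, v ∈ C := h1
      rw [hC] at h1'
      obtain ⟨a, ha, hxa⟩ := h1'
      rw [hP]
      refine ⟨fun v => a v + e, fun v hv => add_pos_of_nonneg_of_pos (ha v hv) h2, ?_⟩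
      simp only [add_smul, Finset.sum_add_distrib]
      rw [← hxa, ← Finset.smul_sum, sub_add_cancel]
end

section
/- Let d ≥ 1 and let g : Fin n → ℝ^d be a finite family of vectors such that g i ≠ 0 for all i and, for all i ≠ j, g i is not a nonnegative scalar multiple of g j. Then {∑_i a_i • g i | a : Fin n → ℝ, ∀ i, 0 < a_i ≤ 1} = relint(zono(g)) ∪ adj(g). (Theorem 2: for a path π, Reach(π) = relint(zono(G_M)) ∪ adj(G_M), stated geometrically for a generator satisfying the defining conditions of G_M.) -/
open Pointwise

/-- The zonotope generated by a finite family `g : Fin n → ℝ^d`: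
all combinations `∑ i, a i • g i` with coefficients `a i ∈ [0,1]`. -/
def zonoSet {d n : ℕ} (g : Fin n → (Fin d → ℝ)) : Set (Fin d → ℝ) :=
  {x | ∃ a : Fin n → ℝ, (∀ i, 0 ≤ a i ∧ a i ≤ 1) ∧ x = ∑ i, a i • g i}

/-- A face of the zonotope of `g`: a nonempty subset of the zonotope on which
some linear functional attains its maximum over the zonotope. -/
def IsZonoFace {d n : ℕ} (g : Fin n → (Fin d → ℝ)) (F : Set (Fin d → ℝ)) : Prop :=
  F.Nonempty ∧ ∃ l : (Fin d → ℝ) →ₗ[ℝ] ℝ,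
    F = {x | x ∈ zonoSet g ∧ ∀ y ∈ zonoSet g, l y ≤ l x}

/-- `adjSet g` : the union of `{σ_g}` (where `σ_g = ∑ i, g i`) with the
relative interiors of all faces of the zonotope of `g` containing `σ_g`. -/
def adjSet {d n : ℕ} (g : Fin n → (Fin d → ℝ)) : Set (Fin d → ℝ) :=
  {∑ i, g i} ∪
    ⋃ F ∈ {F | IsZonoFace g F ∧ (∑ i, g i) ∈ F}, intrinsicInterior ℝ F

lemma relint_push {E : Type*} [NormedAddCommGroup E] [NormedSpace ℝ E] {F : Set E} {x y : E}
    (hx : x ∈ intrinsicInterior ℝ F) (hy : y ∈ F) : ∃ ε : ℝ, 0 < ε ∧ x + ε • (x - y) ∈ F := by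
  obtain ⟨p, hp, rfl⟩ := mem_intrinsicInterior.1 hx
  let q : affineSpan ℝ F := ⟨y, subset_affineSpan ℝ F hy⟩
  have hmem : ∀ t : ℝ, (p : E) + t • ((p : E) - y) ∈ affineSpan ℝ F := by
    intro t
    have := AffineMap.lineMap_mem (Q := affineSpan ℝ F) (-t) p.2 q.2
    convert this using 1
    simp only [AffineMap.lineMap_apply, vsub_eq_sub, vadd_eq_add, q]
    module
  let φ : ℝ → affineSpan ℝ F := fun t => ⟨_, hmem t⟩
  have hφ : Continuous φ := by
    apply Continuous.subtype_mk
    fun_prop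
  have h0 : φ 0 = p := by
    apply Subtype.ext
    simp [φ]
  have hn : φ ⁻¹' (interior ((↑) ⁻¹' F)) ∈ nhds (0 : ℝ) := by
    apply hφ.continuousAt.preimage_mem_nhds
    rw [h0]
    exact isOpen_interior.mem_nhds hp
  obtain ⟨ε, hε, hb⟩ := Metric.mem_nhds_iff.1 hn
  refine ⟨ε / 2, by positivity, ?_⟩
  have : ε / 2 ∈ Metric.ball (0 : ℝ) ε := by
    rw [Metric.mem_ball, dist_zero_right, Real.norm_eq_abs, abs_of_pos (by positivity)]
    linarith
  have h2 : φ (ε / 2) ∈ interior ((↑) ⁻¹' F : Set (affineSpan ℝ F)) := hb this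
  exact (interior_subset h2 : _ ∈ ((↑) ⁻¹' F : Set (affineSpan ℝ F)))

lemma relint_sep {E : Type*} [NormedAddCommGroup E] [NormedSpace ℝ E] [FiniteDimensional ℝ E]
    {F : Set E} (hF : Convex ℝ F) {x : E} (hxF : x ∈ F) (hx : x ∉ intrinsicInterior ℝ F) :
    ∃ l : E →ₗ[ℝ] ℝ, (∀ y ∈ F, l y ≤ l x) ∧ ∃ y ∈ F, l y < l x := by
  have : Nonempty (affineSpan ℝ F) := ⟨⟨x, subset_affineSpan ℝ F hxF⟩⟩
  let p : affineSpan ℝ F := ⟨x, subset_affineSpan ℝ F hxF⟩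
  let e := AffineIsometryEquiv.vaddConst ℝ p
  have he : ∀ w, ((e w : affineSpan ℝ F) : E) = (w : E) + x := fun w => rfl
  let S : Set (affineSpan ℝ F).direction := e ⁻¹' ((↑) ⁻¹' F)
  have hSm : ∀ w, w ∈ S ↔ (w : E) + x ∈ F := fun w => Iff.rfl
  have hS : Convex ℝ S := by
    intro u hu v hv a b ha hb hab
    rw [hSm] at *
    have := hF hu hv ha hb hab
    convert this using 1
    have hx1 : x = (a + b) • x := by rw [hab, one_smul]
    push_cast
    nth_rewrite 1 [hx1]
    module
  have hint : interior S = e ⁻¹' (interior ((↑) ⁻¹' F)) :=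
    (e.toHomeomorph.preimage_interior _).symm
  have hne : (interior S).Nonempty := by
    obtain ⟨z, hz⟩ := Set.Nonempty.intrinsicInterior hF ⟨x, hxF⟩
    obtain ⟨q, hq, -⟩ := mem_intrinsicInterior.1 hz
    refine ⟨e.symm q, ?_⟩
    rw [hint]
    simpa using hq
  have h0 : (0 : (affineSpan ℝ F).direction) ∉ interior S := by
    rw [hint]
    intro h
    refine hx (mem_intrinsicInterior.2 ⟨e 0, h, ?_⟩)
    rw [he]; simp
  obtain ⟨f, hf⟩ := geometric_hahn_banach_open_point hS.interior isOpen_interior h0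
  obtain ⟨l, hl⟩ := LinearMap.exists_extend (f : (affineSpan ℝ F).direction →ₗ[ℝ] ℝ)
  have hlw : ∀ w : (affineSpan ℝ F).direction, l w = f w := fun w => by
    have := LinearMap.congr_fun hl w
    simpa using this
  refine ⟨l, ?_, ?_⟩
  · intro y hy
    have hq : y ∈ affineSpan ℝ F := subset_affineSpan ℝ F hy
    let w : (affineSpan ℝ F).direction := e.symm ⟨y, hq⟩
    have hw : (w : E) + x = y := by
      rw [← he]; simp [w]
    have hwS : w ∈ closure (interior S) := by
      rw [hS.closure_interior_eq_closure_of_nonempty_interior hne]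
      apply subset_closure
      rw [hSm, hw]; exact hy
    have : f w ≤ 0 := by
      refine closure_minimal (t := {w | f w ≤ 0}) ?_ (isClosed_le f.continuous continuous_const) hwS
      intro v hv
      simpa using (hf v hv).le
    rw [← hw, map_add, hlw]; linarith
  · obtain ⟨w, hw⟩ := hne
    refine ⟨(w : E) + x, (hSm w).1 (interior_subset hw), ?_⟩
    have := hf w hw
    rw [map_zero] at this
    rw [map_add, hlw]; linarith

lemma zono_convex {d n : ℕ} (g : Fin n → (Fin d → ℝ)) : Convex ℝ (zonoSet g) := by
  rintro u ⟨a, ha, rfl⟩ v ⟨b, hb, rfl⟩ s t hs ht hst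
  refine ⟨fun i => s * a i + t * b i, fun i => ⟨?_, ?_⟩, ?_⟩
  · have := (ha i).1; have := (hb i).1; positivity
  · nlinarith [(ha i).2, (hb i).2]
  · simp only [Finset.smul_sum, ← Finset.sum_add_distrib, smul_smul, add_smul]

lemma lmap {d n : ℕ} (g : Fin n → (Fin d → ℝ)) (l : (Fin d → ℝ) →ₗ[ℝ] ℝ) (a : Fin n → ℝ) :
    l (∑ i, a i • g i) = ∑ i, a i * l (g i) := by simp

lemma upd {d n : ℕ} (g : Fin n → (Fin d → ℝ)) (a : Fin n → ℝ) (i : Fin n) (t : ℝ) :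
    ∑ j, Function.update a i t j • g j = ∑ j, a j • g j + (t - a i) • g i := by
  have : ∀ j, Function.update a i t j • g j = a j • g j + (if j = i then (t - a i) • g i else 0) := by
    intro j
    by_cases h : j = i
    · subst h; simp; module
    · simp [h]
  simp [this, Finset.sum_add_distrib]

lemma mem_adj {d n : ℕ} (g : Fin n → (Fin d → ℝ)) (a : Fin n → ℝ)
    (ha : ∀ i, 0 < a i ∧ a i ≤ 1) : ∑ i, a i • g i ∈ adjSet g := by
  classical
  let P : ((Fin d → ℝ) →ₗ[ℝ] ℝ) → Prop := fun l =>
    (∀ i, 0 ≤ l (g i)) ∧ ∀ i, a i < 1 → l (g i) = 0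
  let T : Set (Finset (Fin n)) := {s | ∃ l, P l ∧ ∀ i, i ∈ s ↔ 0 < l (g i)}
  have hT : T.Nonempty := ⟨∅, 0, ⟨by simp, by simp⟩, by simp⟩
  obtain ⟨s, ⟨⟨l, ⟨hl0, hl1⟩, hls⟩, hmax⟩⟩ := T.toFinite.exists_maximal hT
  set x := ∑ i, a i • g i with hxdef
  let F : Set (Fin d → ℝ) := {x | x ∈ zonoSet g ∧ ∀ y ∈ zonoSet g, l y ≤ l x}
  have hσ : ∀ b : Fin n → ℝ, (∀ i, b i ≤ 1) → l (∑ i, b i • g i) ≤ l (∑ i, g i) := by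
    intro b hb
    rw [lmap, map_sum]
    exact Finset.sum_le_sum fun i _ => by nlinarith [hb i, hl0 i]
  have hfull : ∀ b : Fin n → ℝ, (∀ i, 0 ≤ b i ∧ b i ≤ 1) → (∀ i, 0 < l (g i) → b i = 1) →
      ∑ i, b i • g i ∈ F := by
    intro b hb hb1
    refine ⟨⟨b, hb, rfl⟩, ?_⟩
    rintro y ⟨c, hc, rfl⟩
    refine (hσ c fun i => (hc i).2).trans (le_of_eq ?_)
    rw [lmap, map_sum]
    refine Finset.sum_congr rfl fun i _ => ?_
    rcases (hl0 i).eq_or_lt with h | h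
    · rw [← h]; simp
    · rw [hb1 i h, one_mul]
  have hσF : ∑ i, g i ∈ F := by
    have := hfull (fun _ => 1) (by simp) (by simp)
    simpa using this
  have ha1 : ∀ i, 0 < l (g i) → a i = 1 := by
    intro i hi
    by_contra h
    exact hi.ne' (hl1 i (lt_of_le_of_ne (ha i).2 h))
  have hxF : x ∈ F := hfull a (fun i => ⟨(ha i).1.le, (ha i).2⟩) ha1
  have hFc : Convex ℝ F := by
    rintro u ⟨hu, hu'⟩ v ⟨hv, hv'⟩ p q hp hq hpq
    refine ⟨zono_convex g hu hv hp hq hpq, fun y hy => ?_⟩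
    have h1 := hu' y hy
    have h2 := hv' y hy
    rw [map_add, map_smul, map_smul, smul_eq_mul, smul_eq_mul]
    have : l y = p * l y + q * l y := by rw [← add_mul, hpq, one_mul]
    rw [this]
    gcongr
  have hFface : IsZonoFace g F := ⟨⟨x, hxF⟩, l, rfl⟩
  right
  simp only [Set.mem_iUnion]
  refine ⟨F, ⟨hFface, hσF⟩, ?_⟩
  by_contra hx
  obtain ⟨m, hm, y, hyF, hy⟩ := relint_sep hFc hxF hx
  have hupd : ∀ i, l (g i) = 0 → ∀ t, 0 ≤ t → t ≤ 1 → (t - a i) * m (g i) ≤ 0 := by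
    intro i hi t ht0 ht1
    have := hm _ (hfull (Function.update a i t) (fun j => by
      by_cases h : j = i
      · subst h; simp [ht0, ht1]
      · simp [h, (ha j).1.le, (ha j).2]) (fun j hj => by
      have : j ≠ i := by rintro rfl; linarith
      simp [this, ha1 j hj]))
    rw [upd, map_add, map_smul, smul_eq_mul] at this
    linarith
  have hm0 : ∀ i, l (g i) = 0 → 0 ≤ m (g i) := by
    intro i hi
    have := hupd i hi 0 le_rfl zero_le_one
    by_contra! h
    nlinarith [(ha i).1]
  have hm1 : ∀ i, a i < 1 → m (g i) = 0 := by
    intro i hi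
    have := hupd i (hl1 i hi) 1 zero_le_one le_rfl
    have h2 := hm0 i (hl1 i hi)
    by_contra h
    have : 0 < m (g i) := lt_of_le_of_ne h2 (Ne.symm h)
    nlinarith
  obtain ⟨i0, hi0, hi0m⟩ : ∃ i, l (g i) = 0 ∧ 0 < m (g i) := by
    by_contra! hcon
    obtain ⟨⟨b, hb, rfl⟩, hymax⟩ := hyF
    have hle := hymax _ ⟨fun _ => 1, by simp, rfl⟩
    have hb1 : ∀ i, 0 < l (g i) → b i = 1 := by
      rw [lmap, lmap] at hle
      have hterm : ∀ i ∈ Finset.univ, b i * l (g i) ≤ 1 * l (g i) := fun i _ =>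
        mul_le_mul_of_nonneg_right (hb i).2 (hl0 i)
      have heq := (Finset.sum_eq_sum_iff_of_le hterm).1
        (le_antisymm (Finset.sum_le_sum hterm) hle)
      intro i hi
      exact mul_right_cancel₀ hi.ne' (heq i (Finset.mem_univ i))
    refine hy.ne ?_
    rw [hxdef, lmap, lmap]
    refine Finset.sum_congr rfl fun i _ => ?_
    rcases (hl0 i).eq_or_lt with h | h
    · have : m (g i) = 0 := le_antisymm (hcon i h.symm) (hm0 i h.symm)
      rw [this]; simp
    · rw [hb1 i h, ha1 i h]
  obtain ⟨N, hN⟩ : ∃ N : ℝ, ∀ i, 0 < l (g i) → 0 < N * l (g i) + m (g i) := by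
    obtain ⟨N, hN⟩ := (Set.finite_range fun i => -m (g i) / l (g i)).bddAbove
    refine ⟨N + 1, fun i hi => ?_⟩
    have := hN ⟨i, rfl⟩
    rw [div_le_iff₀ hi] at this
    linarith
  have hl'0 : ∀ i, l (g i) = 0 → (N • l + m) (g i) = m (g i) := by
    intro i hi; simp [hi]
  have hl'1 : ∀ i, 0 < l (g i) → 0 < (N • l + m) (g i) := by
    intro i hi; simpa using hN i hi
  let s' : Finset (Fin n) := Finset.univ.filter fun i => 0 < (N • l + m) (g i)
  have hs' : s' ∈ T := by
    refine ⟨N • l + m, ⟨fun i => ?_, fun i hi => ?_⟩, fun i => by simp [s']⟩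
    · rcases (hl0 i).eq_or_lt with h | h
      · rw [hl'0 i h.symm]; exact hm0 i h.symm
      · exact (hl'1 i h).le
    · rw [hl'0 i (hl1 i hi)]; exact hm1 i hi
  have hss : s ≤ s' := by
    intro i hi
    exact Finset.mem_filter.2 ⟨Finset.mem_univ _, hl'1 i ((hls i).1 hi)⟩
  have : i0 ∈ s := hmax hs' hss
    (Finset.mem_filter.2 ⟨Finset.mem_univ _, by rw [hl'0 i0 hi0]; exact hi0m⟩)
  exact ((hls i0).1 this).ne' hi0

lemma relint_reach {d n : ℕ} (g : Fin n → (Fin d → ℝ)) (F : Set (Fin d → ℝ))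
    (hF : F ⊆ zonoSet g) (hσ : ∑ i, g i ∈ F) {x : Fin d → ℝ} (hx : x ∈ intrinsicInterior ℝ F) :
    ∃ a : Fin n → ℝ, (∀ i, 0 < a i ∧ a i ≤ 1) ∧ x = ∑ i, a i • g i := by
  obtain ⟨ε, hε, hz⟩ := relint_push hx hσ
  obtain ⟨b, hb, hbz⟩ := hF hz
  refine ⟨fun i => (1 + ε)⁻¹ * (b i + ε), fun i => ⟨?_, ?_⟩, ?_⟩
  · have := (hb i).1; positivity
  · rw [inv_mul_le_iff₀ (by positivity)]; linarith [(hb i).2]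
  · simp only [mul_smul, add_smul, Finset.sum_add_distrib, ← Finset.smul_sum]
    rw [← hbz, eq_inv_smul_iff₀ (by positivity)]
    module

/-- Theorem 2, geometric form. Let `d ≥ 1` and let
`g : Fin n → ℝ^d` be a family of nonzero vectors no two of which are
nonnegative multiples of one another (the defining conditions of `G_M`).
Then the set of combinations `∑ i, a i • g i` with all `a i ∈ (0,1]` equals
`relint(zono(g)) ∪ adj(g)`. -/
theorem path_reach_eq_relint_zono_union_adj (d n : ℕ) (hd : 1 ≤ d)
    (g : Fin n → (Fin d → ℝ)) (hg0 : ∀ i, g i ≠ 0)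
    (hgm : ∀ i j, i ≠ j → ∀ c : ℝ, 0 ≤ c → g i ≠ c • g j) :
    {x : Fin d → ℝ | ∃ a : Fin n → ℝ, (∀ i, 0 < a i ∧ a i ≤ 1) ∧
        x = ∑ i, a i • g i} =
      intrinsicInterior ℝ (zonoSet g) ∪ adjSet g := by
  apply Set.Subset.antisymm
  · rintro x ⟨a, ha, rfl⟩
    exact Or.inr (mem_adj g a ha)
  · rintro x (hx | hx | hx)
    · exact relint_reach g _ subset_rfl ⟨fun _ => 1, by simp, by simp⟩ hx
    · exact ⟨fun _ => 1, by simp, by simpa using hx⟩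
    · simp only [Set.mem_iUnion] at hx
      obtain ⟨F, ⟨⟨_, l, hF⟩, hσ⟩, hx⟩ := hx
      refine relint_reach g F ?_ hσ hx
      rw [hF]
      exact fun y hy => hy.1
end

section
/- Let d ≥ 1. Let h : Fin m → ℝ^d be a family with h i ≠ 0 for all i and with h i not a nonnegative scalar multiple of h j for i ≠ j. Let G₁,…,Gₙ ⊆ ℝ^d be finite sets and let I₁,…,I_k be a partition of {1,…,n} such that span(G_i) = span(G_j) whenever i and j lie in the same class I_ℓ. Then {∑_i a_i • h i | ∀ i, 0 < a_i ≤ 1} + ∑_{i=1}^n (pos(G_i) ∪ {0}) = (relint(zono(h)) ∪ adj(h)) + ∑_{j=1}^k (relint(cone(⋃_{i ∈ I_j} G_i)) ∪ {0}), where both sides are iterated Minkowski sums. (Theorem 3: the reachability set of a linear path scheme is the Minkowski sum of the path's zonotope part and one relative-interior-of-cone term per class of cycles with a common span.) -/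
open Pointwise

/-- The convex cone of a finite set `G ⊆ ℝ^d`: all nonnegative combinations
of elements of `G`. -/
def coneF {d : ℕ} (G : Finset (Fin d → ℝ)) : Set (Fin d → ℝ) :=
  {x | ∃ a : (Fin d → ℝ) → ℝ, (∀ v ∈ G, 0 ≤ a v) ∧ x = ∑ v ∈ G, a v • v}

/-- The set of strictly positive combinations of a finite set `G ⊆ ℝ^d`. -/
def posF {d : ℕ} (G : Finset (Fin d → ℝ)) : Set (Fin d → ℝ) :=
  {x | ∃ a : (Fin d → ℝ) → ℝ, (∀ v ∈ G, 0 < a v) ∧ x = ∑ v ∈ G, a v • v}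

open Filter Topology in
lemma aux_small {ι : Type*} [Finite ι] (P : ι → ℝ → Prop)
    (hP : ∀ i, ∀ᶠ t in 𝓝[>] (0:ℝ), P i t) : ∃ t : ℝ, 0 < t ∧ ∀ i, P i t := by
  have h1 : ∀ᶠ t in 𝓝[>] (0:ℝ), ∀ i, P i t := eventually_all.2 hP
  have h2 : ∀ᶠ t in 𝓝[>] (0:ℝ), 0 < t := eventually_mem_nhdsWithin
  exact (h2.and h1).exists

open Filter Topology in
lemma aux_pos (a q : ℝ) (ha : 0 < a) : ∀ᶠ t in 𝓝[>] (0:ℝ), 0 < a + t * q := by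
  have : Tendsto (fun t : ℝ => a + t * q) (𝓝 0) (𝓝 (a + 0 * q)) :=
    (by fun_prop : Continuous fun t : ℝ => a + t * q).tendsto 0
  have h2 := this.eventually (lt_mem_nhds (by simpa using ha : (0:ℝ) < a + 0 * q))
  exact h2.filter_mono nhdsWithin_le_nhds

lemma farkas_aux {E ι : Type*} [AddCommGroup E] [Module ℝ E] [DecidableEq ι] (s : Finset ι) :
    ∀ (v : ι → E) (w : E)
    (_ : ∀ l : E →ₗ[ℝ] ℝ, (∀ i ∈ s, 0 ≤ l (v i)) → 0 ≤ l w),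
    ∃ c : ι → ℝ, (∀ i ∈ s, 0 ≤ c i) ∧ w = ∑ i ∈ s, c i • v i := by
  induction s using Finset.induction_on with
  | empty =>
    intro v w H
    refine ⟨0, by simp, ?_⟩
    simp only [Finset.sum_empty]
    by_contra hw
    obtain ⟨l, hl⟩ : ∃ l : E →ₗ[ℝ] ℝ, l w ≠ 0 := by
      by_contra hcon
      push Not at hcon
      exact hw ((Module.forall_dual_apply_eq_zero_iff ℝ w).1 hcon)
    have h1 := H l (by simp)
    have h2 := H (-l) (by simp)
    simp at h2
    exact hl (le_antisymm h2 h1)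
  | insert a s ha ih =>
    intro v w H
    by_cases hc : ∀ l : E →ₗ[ℝ] ℝ, (∀ i ∈ s, 0 ≤ l (v i)) → 0 ≤ l w
    · obtain ⟨c, hc0, hc⟩ := ih v w hc
      refine ⟨Function.update c a 0, ?_, ?_⟩
      · intro i hi
        by_cases hia : i = a
        · simp [hia]
        · simp [hia]; exact hc0 i (by simpa [hia] using hi)
      · rw [Finset.sum_insert ha, hc]
        simp only [Function.update_self, zero_smul, zero_add]
        refine Finset.sum_congr rfl fun i hi => ?_
        rw [Function.update_of_ne]
        rintro rfl; exact ha hi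
    · push Not at hc
      obtain ⟨l0, hl0, hw0⟩ := hc
      have hla : l0 (v a) < 0 := by
        by_contra hcon
        push Not at hcon
        have := H l0 (by
          intro i hi
          rcases Finset.mem_insert.1 hi with rfl | hi
          · exact hcon
          · exact hl0 i hi)
        linarith
      obtain ⟨c, hc0, hc⟩ := ih (fun i => v i - (l0 (v i) / l0 (v a)) • v a)
        (w - (l0 w / l0 (v a)) • v a) (by
          intro l hl
          have := H (l - (l (v a) / l0 (v a)) • l0) (by
            intro i hi
            rcases Finset.mem_insert.1 hi with rfl | hi
            · have hne := hla.ne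
              simp only [LinearMap.sub_apply, LinearMap.smul_apply, smul_eq_mul]
              rw [div_mul_cancel₀ _ hne, sub_self]
            · have := hl i hi
              simp only [LinearMap.sub_apply, LinearMap.smul_apply, smul_eq_mul, map_sub, map_smul] at this ⊢
              calc _ ≤ _ := this
                _ = _ := by ring)
          simp only [LinearMap.sub_apply, LinearMap.smul_apply, smul_eq_mul, map_sub, map_smul] at this ⊢
          calc _ ≤ _ := this
            _ = _ := by ring)
      refine ⟨Function.update c a (l0 w / l0 (v a) - ∑ i ∈ s, c i * (l0 (v i) / l0 (v a))), ?_, ?_⟩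
      · intro i hi
        by_cases hia : i = a
        · subst hia
          simp only [Function.update_self]
          have h1 : 0 ≤ l0 w / l0 (v i) := div_nonneg_of_nonpos hw0.le hla.le
          have h2 : ∑ j ∈ s, c j * (l0 (v j) / l0 (v i)) ≤ 0 :=
            Finset.sum_nonpos fun j hj => mul_nonpos_of_nonneg_of_nonpos (hc0 j hj)
              (div_nonpos_of_nonneg_of_nonpos (hl0 j hj) hla.le)
          linarith
        · simp [hia]; exact hc0 i (by simpa [hia] using hi)
      · rw [Finset.sum_insert ha]
        have : ∑ i ∈ s, Function.update c a (l0 w / l0 (v a) - ∑ i ∈ s, c i * (l0 (v i) / l0 (v a))) i • v i = ∑ i ∈ s, c i • v i := by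
          refine Finset.sum_congr rfl fun i hi => ?_
          rw [Function.update_of_ne]
          rintro rfl; exact ha hi
        rw [this, Function.update_self]
        rw [sub_eq_iff_eq_add] at hc
        refine hc.trans ?_
        simp only [smul_sub, Finset.sum_sub_distrib, sub_smul, Finset.sum_smul, smul_smul]
        abel

lemma relint_ball {E : Type*} [NormedAddCommGroup E] [NormedSpace ℝ E] {C : Set E} {x : E} :
    x ∈ intrinsicInterior ℝ C ↔ x ∈ affineSpan ℝ C ∧
      ∃ ε > 0, ∀ z ∈ affineSpan ℝ C, dist z x < ε → z ∈ C := by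
  rw [mem_intrinsicInterior]
  constructor
  · rintro ⟨p, hp, rfl⟩
    refine ⟨p.2, ?_⟩
    rw [mem_interior_iff_mem_nhds, Metric.mem_nhds_iff] at hp
    obtain ⟨ε, hε, hb⟩ := hp
    exact ⟨ε, hε, fun z hz hd => hb (show (⟨z, hz⟩ : affineSpan ℝ C) ∈ Metric.ball p ε from hd)⟩
  · rintro ⟨hx, ε, hε, hb⟩
    refine ⟨⟨x, hx⟩, ?_, rfl⟩
    rw [mem_interior_iff_mem_nhds, Metric.mem_nhds_iff]
    exact ⟨ε, hε, fun z hz => hb z z.2 hz⟩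

open Filter Topology in
lemma relint_fwd {E : Type*} [NormedAddCommGroup E] [NormedSpace ℝ E] {C : Set E} {x y : E}
    (hx : x ∈ intrinsicInterior ℝ C) (hy : y ∈ C) : ∃ t : ℝ, 0 < t ∧ x + t • (x - y) ∈ C := by
  obtain ⟨hxa, ε, hε, hb⟩ := relint_ball.1 hx
  have : Tendsto (fun t : ℝ => x + t • (x - y)) (𝓝 0) (𝓝 (x + (0:ℝ) • (x - y))) :=
    (by fun_prop : Continuous fun t : ℝ => x + t • (x - y)).tendsto 0
  have h2 := this.eventually (Metric.ball_mem_nhds _ hε)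
  obtain ⟨t, ht, h⟩ := aux_small (ι := Unit) (fun _ t => x + t • (x - y) ∈ Metric.ball (x + (0:ℝ) • (x - y)) ε)
    (fun _ => h2.filter_mono nhdsWithin_le_nhds)
  refine ⟨t, ht, hb _ ?_ (by simpa using h ())⟩
  have := AffineMap.lineMap_mem (Q := affineSpan ℝ C) (1 + t) (subset_affineSpan ℝ C hy) hxa
  convert this using 1
  simp [AffineMap.lineMap_apply, add_smul]
  abel

lemma relint_bwd {E : Type*} [NormedAddCommGroup E] [NormedSpace ℝ E] [FiniteDimensional ℝ E]
    {C : Set E} {x : E} (hC : Convex ℝ C)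
    (hx : x ∈ C) (H : ∀ y ∈ C, ∃ t : ℝ, 0 < t ∧ x + t • (x - y) ∈ C) :
    x ∈ intrinsicInterior ℝ C := by
  obtain ⟨z, hz⟩ := Set.Nonempty.intrinsicInterior hC ⟨x, hx⟩
  obtain ⟨t, ht, hw⟩ := H z (intrinsicInterior_subset hz)
  obtain ⟨hza, ε, hε, hb⟩ := relint_ball.1 hz
  set w := x + t • (x - z) with hwd
  refine relint_ball.2 ⟨subset_affineSpan ℝ C hx, t / (1 + t) * ε, by positivity, fun y hy hd => ?_⟩
  have hwa := subset_affineSpan ℝ C hw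
  have hz' := AffineMap.lineMap_mem (Q := affineSpan ℝ C) ((1 + t) / t) hwa hy
  have e0 : AffineMap.lineMap w y ((1 + t) / t) = z + ((1 + t) / t) • (y - x) := by
    have : (1 + t) / t = 1 + t⁻¹ := by field_simp; ring
    rw [this, hwd]
    simp only [AffineMap.lineMap_apply, vsub_eq_sub, vadd_eq_add]
    match_scalars <;> field_simp <;> ring
  rw [e0] at hz'
  have h1 := hb _ hz' (by
    rw [dist_eq_norm] at hd ⊢
    rw [add_sub_cancel_left, norm_smul, Real.norm_of_nonneg (by positivity)]
    calc (1 + t) / t * ‖y - x‖ < (1 + t) / t * (t / (1 + t) * ε) := by gcongr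
      _ = ε := by field_simp)
  have h2 := hC hw h1 (a := 1 / (1 + t)) (b := t / (1 + t)) (by positivity) (by positivity)
    (by field_simp)
  convert h2 using 1
  rw [hwd]
  match_scalars <;> field_simp <;> ring

lemma convex_zono {d m : ℕ} (h : Fin m → (Fin d → ℝ)) : Convex ℝ (zonoSet h) := by
  rintro x ⟨a, ha, rfl⟩ y ⟨b, hb, rfl⟩ s t hs ht hst
  refine ⟨fun i => s * a i + t * b i, fun i => ?_, ?_⟩
  · obtain ⟨a0, a1⟩ := ha i
    obtain ⟨b0, b1⟩ := hb i
    constructor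
    · positivity
    · nlinarith
  · simp only [add_smul, Finset.sum_add_distrib, Finset.smul_sum, smul_smul]

lemma zono_back {d m : ℕ} (h : Fin m → (Fin d → ℝ)) (F : Set (Fin d → ℝ)) (hF : F ⊆ zonoSet h)
    (hs : (∑ i, h i) ∈ F) {x : Fin d → ℝ} (hx : x ∈ intrinsicInterior ℝ F) :
    ∃ a : Fin m → ℝ, (∀ i, 0 < a i ∧ a i ≤ 1) ∧ x = ∑ i, a i • h i := by
  obtain ⟨t, ht, hz⟩ := relint_fwd hx hs
  obtain ⟨c, hc, he⟩ := hF hz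
  refine ⟨fun i => (c i + t) / (1 + t), fun i => ⟨?_, ?_⟩, ?_⟩
  · have := (hc i).1; positivity
  · have := (hc i).2
    rw [div_le_one (by positivity)]; linarith
  · have : x = (1 / (1 + t)) • ((x + t • (x - ∑ i, h i)) + t • ∑ i, h i) := by
      match_scalars <;> field_simp <;> ring
    rw [this, he, Finset.smul_sum, ← Finset.sum_add_distrib, Finset.smul_sum]
    refine Finset.sum_congr rfl fun i _ => ?_
    match_scalars; field_simp

lemma zono_fwd {d m : ℕ} (h : Fin m → (Fin d → ℝ)) (a : Fin m → ℝ)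
    (ha : ∀ i, 0 < a i ∧ a i ≤ 1) : (∑ i, a i • h i) ∈ adjSet h := by
  classical
  let P : Fin m → Prop := fun i => ∃ e : Fin m → ℝ, -h i = ∑ j, e j • h j ∧ ∀ j, a j = 1 → 0 ≤ e j
  have hl : ∀ i, ∃ l : (Fin d → ℝ) →ₗ[ℝ] ℝ, (∀ j, 0 ≤ l (h j)) ∧ (∀ j, a j < 1 → l (h j) = 0) ∧
      (¬ P i → 0 < l (h i)) := by
    intro i
    by_cases hP : P i
    · exact ⟨0, by simp, by simp, fun h => absurd hP h⟩
    by_contra hcon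
    push Not at hcon
    apply hP
    obtain ⟨c, hc0, hc⟩ := farkas_aux (Finset.univ : Finset (Fin m ⊕ Fin m))
      (Sum.elim h (fun j => if a j < 1 then -h j else 0)) (-h i) (by
        intro l hl
        simp at hl
        obtain ⟨h1, h2⟩ := hl
        have := (hcon l h1 (by
          intro j hj
          have := h2 j
          rw [if_pos hj] at this
          simp at this
          linarith [h1 j])).2
        simpa using this)
    rw [Fintype.sum_sum_type] at hc
    refine ⟨fun j => c (.inl j) - if a j < 1 then c (.inr j) else 0, ?_, ?_⟩
    · rw [hc, ← Finset.sum_add_distrib]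
      refine Finset.sum_congr rfl fun j _ => ?_
      by_cases hj : a j < 1 <;> simp [hj]
      module
    · intro j hj
      simp [hj]
      exact hc0 _ (by simp)
  choose l hl1 hl2 hl3 using hl
  let L : (Fin d → ℝ) →ₗ[ℝ] ℝ := ∑ i, l i
  have hLa : ∀ y, L y = ∑ i, l i y := fun y => by simp [L]
  have hL1 : ∀ j, 0 ≤ L (h j) := fun j => by
    rw [hLa]; exact Finset.sum_nonneg fun i _ => hl1 i j
  have hL2 : ∀ j, a j < 1 → L (h j) = 0 := fun j hj => by
    rw [hLa]; exact Finset.sum_eq_zero fun i _ => hl2 i j hj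
  have hL3 : ∀ j, ¬ P j → 0 < L (h j) := fun j hj => by
    rw [hLa]; exact Finset.sum_pos' (fun i _ => hl1 i j) ⟨j, by simp, hl3 j hj⟩
  have hmax : ∀ y ∈ zonoSet h, L y ≤ L (∑ i, h i) := by
    rintro y ⟨b, hb, rfl⟩
    simp only [map_sum, map_smul, smul_eq_mul]
    refine Finset.sum_le_sum fun i _ => ?_
    nlinarith [hL1 i, (hb i).2]
  have hLx : L (∑ i, a i • h i) = L (∑ i, h i) := by
    simp only [map_sum, map_smul, smul_eq_mul]
    refine Finset.sum_congr rfl fun i _ => ?_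
    rcases (ha i).2.lt_or_eq with h1 | h1
    · simp [hL2 i h1]
    · simp [h1]
  have hxz : (∑ i, a i • h i) ∈ zonoSet h := ⟨a, fun i => ⟨(ha i).1.le, (ha i).2⟩, rfl⟩
  have hsz : (∑ i, h i) ∈ zonoSet h := ⟨fun _ => 1, by simp, by simp⟩
  let F : Set (Fin d → ℝ) := {x | x ∈ zonoSet h ∧ ∀ y ∈ zonoSet h, L y ≤ L x}
  have hsF : (∑ i, h i) ∈ F := ⟨hsz, hmax⟩
  have hFL : ∀ y, y ∈ F ↔ y ∈ zonoSet h ∧ L y = L (∑ i, h i) := by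
    intro y
    constructor
    · rintro ⟨h1, h2⟩
      exact ⟨h1, le_antisymm (hmax y h1) (h2 _ hsz)⟩
    · rintro ⟨h1, h2⟩
      exact ⟨h1, fun z hz => by rw [h2]; exact hmax z hz⟩
  have hFc : Convex ℝ F := by
    intro x hx y hy s t hs ht hst
    rw [hFL] at hx hy ⊢
    refine ⟨convex_zono h hx.1 hy.1 hs ht hst, ?_⟩
    rw [map_add, map_smul, map_smul, hx.2, hy.2, ← add_smul, hst, one_smul]
  right
  refine Set.mem_iUnion₂.2 ⟨F, ⟨⟨⟨_, hsF⟩, L, rfl⟩, hsF⟩, ?_⟩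
  refine relint_bwd hFc ((hFL _).2 ⟨hxz, hLx⟩) ?_
  intro y hy
  obtain ⟨⟨b, hb, rfl⟩, hyL⟩ := (hFL y).1 hy
  -- relations
  have hr : ∀ i, ∃ r : Fin m → ℝ, ∑ j, r j • h j = 0 ∧ (∀ j, a j = 1 → 0 ≤ r j) ∧
      (P i → a i = 1 → 1 ≤ r i) := by
    intro i
    by_cases hP : P i
    · obtain ⟨e, he, he0⟩ := hP
      refine ⟨fun j => e j + if j = i then 1 else 0, ?_, ?_, ?_⟩
      · simp [add_smul, Finset.sum_add_distrib, ← he]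
      · intro j hj
        have := he0 j hj
        dsimp only
        split_ifs <;> linarith
      · intro _ hi
        have := he0 i hi
        simp; linarith
    · exact ⟨0, by simp, by simp, fun h => absurd h hP⟩
  choose r hr0 hr1 hr2 using hr
  let R : Fin m → ℝ := fun j => ∑ i, r i j
  have hR0 : ∑ j, R j • h j = 0 := by
    simp only [R, Finset.sum_smul]
    rw [Finset.sum_comm]
    exact Finset.sum_eq_zero fun i _ => hr0 i
  have hR1 : ∀ j, a j = 1 → 0 ≤ R j := fun j hj => Finset.sum_nonneg fun i _ => hr1 i j hj
  have hR2 : ∀ j, P j → a j = 1 → 1 ≤ R j := fun j hP hj =>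
    (hr2 j hP hj).trans (Finset.single_le_sum (f := fun i => r i j) (fun i _ => hr1 i j hj) (Finset.mem_univ j))
  have hb1 : ∀ i, ¬ P i → b i = 1 := by
    intro i hi
    have h0 : ∑ j, (1 - b j) * L (h j) = 0 := by
      simp only [map_sum, map_smul, smul_eq_mul] at hyL
      simp only [sub_mul, one_mul, Finset.sum_sub_distrib]
      linarith
    have := (Finset.sum_eq_zero_iff_of_nonneg (fun j _ => mul_nonneg (by linarith [(hb j).2]) (hL1 j))).1 h0 i
      (Finset.mem_univ i)
    rcases mul_eq_zero.1 this with h1 | h1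
    · linarith
    · exact absurd h1 (hL3 i hi).ne'
  obtain ⟨t, ht, hT⟩ := aux_small (fun i t => 0 < t → 0 ≤ a i + t * (a i - b i - R i) ∧
      a i + t * (a i - b i - R i) ≤ 1) (by
    intro i
    have e1 := aux_pos (a i) (a i - b i - R i) (ha i).1
    rcases (ha i).2.lt_or_eq with h1 | h1
    · have e2 := aux_pos (1 - a i) (-(a i - b i - R i)) (by linarith)
      filter_upwards [e1, e2] with t h3 h4 _
      exact ⟨h3.le, by linarith⟩
    · filter_upwards [e1] with t h3 ht
      refine ⟨h3.le, ?_⟩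
      have : a i - b i - R i ≤ 0 := by
        by_cases hP : P i
        · have := hR2 i hP h1
          linarith [(hb i).1]
        · rw [hb1 i hP]
          linarith [hR1 i h1]
      nlinarith)
  refine ⟨t, ht, (hFL _).2 ⟨⟨fun i => a i + t * (a i - b i - R i), fun i => hT i ht, ?_⟩, ?_⟩⟩
  · have : ∑ i, (a i + t * (a i - b i - R i)) • h i =
        ∑ i, a i • h i + t • (∑ i, a i • h i - ∑ i, b i • h i) - t • ∑ j, R j • h j := by
      simp only [Finset.smul_sum, smul_sub, ← Finset.sum_add_distrib, ← Finset.sum_sub_distrib]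
      refine Finset.sum_congr rfl fun i _ => ?_
      module
    rw [this, hR0]; simp
  · rw [map_add, map_smul, map_sub, hLx, hyL]; simp

lemma zono_eq {d m : ℕ} (h : Fin m → (Fin d → ℝ)) :
    {x : Fin d → ℝ | ∃ a : Fin m → ℝ, (∀ i, 0 < a i ∧ a i ≤ 1) ∧ x = ∑ i, a i • h i} =
    intrinsicInterior ℝ (zonoSet h) ∪ adjSet h := by
  ext x
  constructor
  · rintro ⟨a, ha, rfl⟩
    exact Or.inr (zono_fwd h a ha)
  · rintro (hx | hx | hx)
    · exact zono_back h _ subset_rfl ⟨fun _ => 1, by simp, by simp⟩ hx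
    · rw [Set.mem_singleton_iff] at hx
      exact ⟨fun _ => 1, by simp, by simp [hx]⟩
    · obtain ⟨F, ⟨⟨_, l, hF⟩, hs⟩, hx⟩ := Set.mem_iUnion₂.1 hx
      refine zono_back h F ?_ hs hx
      rw [hF]
      exact fun y hy => hy.1

lemma convex_cone {d : ℕ} (G : Finset (Fin d → ℝ)) : Convex ℝ (coneF G) := by
  rintro x ⟨a, ha, rfl⟩ y ⟨b, hb, rfl⟩ s t hs ht hst
  refine ⟨fun i => s * a i + t * b i, fun i hi => ?_, ?_⟩
  · have := ha i hi
    have := hb i hi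
    positivity
  · simp only [add_smul, Finset.sum_add_distrib, Finset.smul_sum, smul_smul]

lemma cone_add {d : ℕ} {G : Finset (Fin d → ℝ)} {x y : Fin d → ℝ} (hx : x ∈ coneF G)
    (hy : y ∈ coneF G) : x + y ∈ coneF G := by
  obtain ⟨a, ha, rfl⟩ := hx
  obtain ⟨b, hb, rfl⟩ := hy
  refine ⟨fun i => a i + b i, fun i hi => add_nonneg (ha i hi) (hb i hi), ?_⟩
  simp only [add_smul, Finset.sum_add_distrib]

lemma cone_smul {d : ℕ} {G : Finset (Fin d → ℝ)} {x : Fin d → ℝ} (hx : x ∈ coneF G)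
    {c : ℝ} (hc : 0 ≤ c) : c • x ∈ coneF G := by
  obtain ⟨a, ha, rfl⟩ := hx
  refine ⟨fun i => c * a i, fun i hi => mul_nonneg hc (ha i hi), ?_⟩
  simp only [Finset.smul_sum, smul_smul]

lemma cone_zero {d : ℕ} {G : Finset (Fin d → ℝ)} : (0 : Fin d → ℝ) ∈ coneF G :=
  ⟨0, by simp, by simp⟩

lemma cone_mono {d : ℕ} {G H : Finset (Fin d → ℝ)} (hGH : G ⊆ H) : coneF G ⊆ coneF H := by
  classical
  rintro x ⟨a, ha, rfl⟩
  refine ⟨fun v => if v ∈ G then a v else 0, fun v _ => ?_, ?_⟩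
  · dsimp only
    split_ifs with hv
    · exact ha v hv
    · exact le_rfl
  · simp only [ite_smul, zero_smul]
    rw [Finset.sum_ite_mem, Finset.inter_eq_right.2 hGH]

lemma cone_span {d : ℕ} {G : Finset (Fin d → ℝ)} {x : Fin d → ℝ} (hx : x ∈ coneF G) :
    x ∈ Submodule.span ℝ (G : Set (Fin d → ℝ)) := by
  obtain ⟨a, ha, rfl⟩ := hx
  exact Submodule.sum_mem _ fun v hv => Submodule.smul_mem _ _ (Submodule.subset_span hv)

lemma pos_cone {d : ℕ} {G : Finset (Fin d → ℝ)} {x : Fin d → ℝ} (hx : x ∈ posF G) :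
    x ∈ coneF G := by
  obtain ⟨a, ha, rfl⟩ := hx
  exact ⟨a, fun v hv => (ha v hv).le, rfl⟩

lemma pos_relint {d : ℕ} {G H : Finset (Fin d → ℝ)} (hGH : G ⊆ H)
    (hs : (H : Set (Fin d → ℝ)) ⊆ Submodule.span ℝ (G : Set (Fin d → ℝ)))
    {x : Fin d → ℝ} (hx : x ∈ posF G) : x ∈ intrinsicInterior ℝ (coneF H) := by
  refine relint_bwd (convex_cone H) (cone_mono hGH (pos_cone hx)) fun y hy => ?_
  have hxy : x - y ∈ Submodule.span ℝ (G : Set (Fin d → ℝ)) :=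
    Submodule.sub_mem _ (cone_span (pos_cone hx)) (Submodule.span_le.2 hs (cone_span hy))
  obtain ⟨f, _, hf⟩ := Submodule.mem_span_finset.1 hxy
  obtain ⟨a, ha, rfl⟩ := hx
  obtain ⟨t, ht, hT⟩ := aux_small (ι := G) (fun v t => 0 < a v + t * f v)
    (fun v => aux_pos _ _ (ha v v.2))
  refine ⟨t, ht, cone_mono hGH ⟨fun v => a v + t * f v, fun v hv => (hT ⟨v, hv⟩).le, ?_⟩⟩
  rw [← hf]
  simp only [add_smul, Finset.sum_add_distrib, Finset.smul_sum, smul_smul]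

lemma relint_pos {d : ℕ} {H : Finset (Fin d → ℝ)}
    {x : Fin d → ℝ} (hx : x ∈ intrinsicInterior ℝ (coneF H)) : x ∈ posF H := by
  obtain ⟨t, ht, c, hc, he⟩ := relint_fwd hx (y := ∑ v ∈ H, v) ⟨fun _ => 1, by simp, by simp⟩
  refine ⟨fun v => (c v + t) / (1 + t), fun v hv => ?_, ?_⟩
  · have := hc v hv; positivity
  · have : x = (1 / (1 + t)) • ((x + t • (x - ∑ i ∈ H, i)) + t • ∑ i ∈ H, i) := by
      match_scalars <;> field_simp <;> ring
    rw [this, he, Finset.smul_sum, ← Finset.sum_add_distrib, Finset.smul_sum]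
    refine Finset.sum_congr rfl fun i _ => ?_
    match_scalars; field_simp

lemma relint_add {d : ℕ} {H : Finset (Fin d → ℝ)}
    {x y : Fin d → ℝ} (hx : x ∈ intrinsicInterior ℝ (coneF H)) (hy : y ∈ coneF H) :
    x + y ∈ intrinsicInterior ℝ (coneF H) := by
  refine relint_bwd (convex_cone H) (cone_add (intrinsicInterior_subset hx) hy) fun z hz => ?_
  obtain ⟨t, ht, h⟩ := relint_fwd hx hz
  refine ⟨t, ht, ?_⟩
  have := cone_add h (cone_smul hy (c := 1 + t) (by positivity))
  convert this using 1
  module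

lemma class_eq {d n : ℕ} [DecidableEq (Fin d → ℝ)] (G : Fin n → Finset (Fin d → ℝ))
    (J : Finset (Fin n))
    (hspan : ∀ i ∈ J, ∀ j ∈ J, Submodule.span ℝ (G i : Set (Fin d → ℝ)) =
        Submodule.span ℝ (G j : Set (Fin d → ℝ))) :
    ∑ i ∈ J, (posF (G i) ∪ {0}) = intrinsicInterior ℝ (coneF (J.biUnion G)) ∪ {0} := by
  have hsub : ∀ i ∈ J, G i ⊆ J.biUnion G := fun i hi => Finset.subset_biUnion_of_mem G hi
  have hsp : ∀ i ∈ J, ((J.biUnion G : Finset _) : Set (Fin d → ℝ)) ⊆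
      Submodule.span ℝ (G i : Set (Fin d → ℝ)) := by
    intro i hi v hv
    obtain ⟨j, hj, hv⟩ := Finset.mem_biUnion.1 hv
    rw [hspan i hi j hj]
    exact Submodule.subset_span hv
  ext x
  rw [Set.mem_finsetSum]
  constructor
  · rintro ⟨g, hg, rfl⟩
    have hgc : ∀ i ∈ J, g i ∈ coneF (J.biUnion G) := by
      intro i hi
      rcases hg hi with h1 | h1
      · exact cone_mono (hsub i hi) (pos_cone h1)
      · rw [Set.mem_singleton_iff] at h1
        rw [h1]; exact cone_zero
    by_cases hz : ∀ i ∈ J, g i = 0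
    · right
      exact Finset.sum_eq_zero hz
    · left
      push Not at hz
      obtain ⟨i, hi, hgi⟩ := hz
      rw [← Finset.add_sum_erase J g hi]
      apply relint_add
      · rcases hg hi with h1 | h1
        · exact pos_relint (hsub i hi) (hsp i hi) h1
        · exact absurd h1 hgi
      · refine Finset.sum_induction g (· ∈ coneF (J.biUnion G)) (fun _ _ => cone_add) cone_zero ?_
        intro j hj
        exact hgc j (Finset.mem_of_mem_erase hj)
  · rintro (hx | hx)
    · obtain ⟨a, ha, rfl⟩ := relint_pos hx
      let N : (Fin d → ℝ) → ℕ := fun v => (J.filter fun i => v ∈ G i).card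
      have hN : ∀ v ∈ J.biUnion G, 0 < N v := by
        intro v hv
        obtain ⟨j, hj, hv⟩ := Finset.mem_biUnion.1 hv
        exact Finset.card_pos.2 ⟨j, by simp [hj, hv]⟩
      refine ⟨fun i => ∑ v ∈ G i, (a v / N v) • v, ?_, ?_⟩
      · intro i hi
        left
        refine ⟨fun v => a v / N v, fun v hv => ?_, rfl⟩
        have h1 := hN v (hsub i hi hv)
        have h2 := ha v (hsub i hi hv)
        positivity
      · have : ∀ i ∈ J, ∑ v ∈ G i, (a v / N v) • v =
            ∑ v ∈ J.biUnion G, if v ∈ G i then (a v / N v) • v else 0 := by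
          intro i hi
          rw [Finset.sum_ite_mem, Finset.inter_eq_right.2 (hsub i hi)]
        rw [Finset.sum_congr rfl this, Finset.sum_comm]
        refine Finset.sum_congr rfl fun v hv => ?_
        have h1 := hN v hv
        rw [← Finset.sum_filter, Finset.sum_const, ← Nat.cast_smul_eq_nsmul ℝ, smul_smul]
        congr 1
        change (N v : ℝ) * _ = _
        field_simp
    · rw [Set.mem_singleton_iff] at hx
      exact ⟨fun _ => 0, fun _ => Or.inr rfl, by simp [hx]⟩

/-- Theorem 3, geometric form. Let `d ≥ 1`, let
`h : Fin m → ℝ^d` satisfy the defining conditions of `G_M`, let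
`G₁, …, Gₙ ⊆ ℝ^d` be finite sets and let `I₁, …, I_k` be a partition of
`{1, …, n}` such that the spans of the `G_i` agree within each class. Then
the Minkowski sum of the set `{∑ i, a i • h i | ∀ i, 0 < a i ≤ 1}` with the
sets `pos(G_i) ∪ {0}` equals the Minkowski sum of
`relint(zono(h)) ∪ adj(h)` with the sets
`relint(cone(⋃_{i ∈ I_j} G_i)) ∪ {0}`. -/
theorem lps_reach_geometry (d m n k : ℕ) (hd : 1 ≤ d)
    [DecidableEq (Fin d → ℝ)]
    (h : Fin m → (Fin d → ℝ)) (hh0 : ∀ i, h i ≠ 0)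
    (hhm : ∀ i j, i ≠ j → ∀ c : ℝ, 0 ≤ c → h i ≠ c • h j)
    (G : Fin n → Finset (Fin d → ℝ)) (I : Fin k → Finset (Fin n))
    (hne : ∀ j, (I j).Nonempty)
    (hdisj : ∀ j₁ j₂, j₁ ≠ j₂ → Disjoint (I j₁) (I j₂))
    (hcover : ∀ i : Fin n, ∃ j, i ∈ I j)
    (hspan : ∀ (l : Fin k), ∀ i ∈ I l, ∀ j ∈ I l,
      Submodule.span ℝ (G i : Set (Fin d → ℝ)) =
        Submodule.span ℝ (G j : Set (Fin d → ℝ))) :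
    ({x : Fin d → ℝ | ∃ a : Fin m → ℝ, (∀ i, 0 < a i ∧ a i ≤ 1) ∧
        x = ∑ i, a i • h i} +
      ∑ i : Fin n, (posF (G i) ∪ {0})) =
    ((intrinsicInterior ℝ (zonoSet h) ∪ adjSet h) +
      ∑ j : Fin k,
        (intrinsicInterior ℝ (coneF ((I j).biUnion G)) ∪ {0})) := by
  rw [zono_eq]
  congr 1
  have hu : (Finset.univ : Finset (Fin n)) = Finset.univ.biUnion I := by
    ext i
    obtain ⟨j, hj⟩ := hcover i
    simp only [Finset.mem_univ, Finset.mem_biUnion, true_and, true_iff]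
    exact ⟨j, hj⟩
  rw [hu, Finset.sum_biUnion (fun a _ b _ hab => hdisj a b hab)]
  exact Finset.sum_congr rfl fun j _ => class_eq G (I j) (hspan j)
end

section
/- Let V = (Q, T, ℓ) be a continuous VASS of dimension d, let x, y ∈ ℚ_{≥0}^d, and let π be a path with p(x) →^π q(y) in the nonnegative semantics. Then there exists a linear path scheme σ = π₀χ₁*π₁⋯χₙ*πₙ over V such that: n ≤ |Q|; every π_i is a simple path; |χ_i| ≤ 4·|Q|·(|T| + d + 2)·(d·|T|^{d+1} + 1) for all 1 ≤ i ≤ n; and y ∈ Reach^x_{≥0}(σ). (Theorem: short linear path schemes suffice for ℚ≥0VASS reachability.) -/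
open Pointwise

namespace SLPS

set_option linter.unusedSectionVars false

variable {d : ℕ} {E Q : Type} [DecidableEq E] [DecidableEq Q]

def Pth (s t : E → Q) : Q → List E → Q → Prop
  | p, [], q => p = q
  | p, e :: r, q => s e = p ∧ Pth s t (t e) r q

inductive WRun (l : E → Fin d → ℚ) :
    (Fin d → ℚ) → List E → (E → ℚ) → (Fin d → ℚ) → Prop
  | nil (x : Fin d → ℚ) : (∀ i, 0 ≤ x i) → WRun l x [] 0 x
  | cons {x y : Fin d → ℚ} {e : E} {r : List E} {w : E → ℚ} (a : ℚ) :
      (∀ i, 0 ≤ x i) → 0 < a → a ≤ 1 → WRun l (x + a • l e) r w y →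
      WRun l x (e :: r) (Pi.single e a + w) y

theorem WRun.left_nn {l : E → Fin d → ℚ} {x y π w} (h : WRun l x π w y) : ∀ i, 0 ≤ x i := by
  cases h <;> assumption

theorem WRun.right_nn {l : E → Fin d → ℚ} {x y π w} (h : WRun l x π w y) : ∀ i, 0 ≤ y i := by
  induction h <;> assumption

theorem WRun.append {l : E → Fin d → ℚ} {x y z a b w v} (h : WRun l x a w y)
    (h2 : WRun l y b v z) : WRun l x (a ++ b) (w + v) z := by
  induction h with
  | nil x hx => simpa using h2
  | cons a hx ha ha1 _ ih =>
    rw [add_assoc]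
    exact WRun.cons a hx ha ha1 (ih h2)

theorem WRun.split {l : E → Fin d → ℚ} {x z a b w} (h : WRun l x (a ++ b) w z) :
    ∃ y w1 w2, WRun l x a w1 y ∧ WRun l y b w2 z := by
  induction a generalizing x w with
  | nil => exact ⟨x, 0, w, WRun.nil x h.left_nn, h⟩
  | cons e r ih =>
    cases h with
    | cons a hx ha ha1 h =>
      obtain ⟨y, w1, w2, h1, h2⟩ := ih h
      exact ⟨y, _, w2, WRun.cons a hx ha ha1 h1, h2⟩

theorem WRun.rev {l : E → Fin d → ℚ} {x y π w} (h : WRun l x π w y) :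
    WRun (fun e => - l e) y π.reverse w x := by
  induction h with
  | nil x hx => exact WRun.nil x hx
  | @cons x y e r w a hx ha ha1 h ih =>
    rw [List.reverse_cons, add_comm]
    refine ih.append ?_
    have : WRun (fun e => - l e) (x + a • l e) [e] (Pi.single e a + 0) x := by
      refine WRun.cons a h.left_nn ha ha1 ?_
      have h3 : x + a • l e + a • (- l e) = x := by simp
      rw [h3]
      exact WRun.nil x hx
    simpa using this

theorem WRun.nonneg {l : E → Fin d → ℚ} {x y π w} (h : WRun l x π w y) (e : E) : 0 ≤ w e := by
  induction h with
  | nil x hx => simp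
  | @cons x y f r w a hx ha ha1 h ih =>
    by_cases hf : e = f
    · subst hf; simp; linarith
    · simp [hf, ih]

theorem WRun.pos {l : E → Fin d → ℚ} {x y π w} (h : WRun l x π w y) (e : E) (he : e ∈ π) :
    0 < w e := by
  induction h with
  | nil x hx => simp at he
  | @cons x y f r w a hx ha ha1 h ih =>
    have := h.nonneg e
    by_cases hf : e = f
    · subst hf; simp; linarith
    · simp [hf] at he ⊢; exact ih he

theorem WRun.zero {l : E → Fin d → ℚ} {x y π w} (h : WRun l x π w y) (e : E) (he : e ∉ π) :
    w e = 0 := by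
  induction h with
  | nil x hx => simp
  | @cons x y f r w a hx ha ha1 h ih =>
    simp at he
    simp [he.1, ih he.2]

theorem WRun.eq [Fintype E] {l : E → Fin d → ℚ} {x y π w} (h : WRun l x π w y) :
    y = x + ∑ e, w e • l e := by
  induction h with
  | nil x hx => simp
  | @cons x y f r w a hx ha ha1 h ih =>
    rw [ih, add_assoc]
    congr 1
    simp only [Pi.add_apply, add_smul, Finset.sum_add_distrib]
    congr 1
    rw [Finset.sum_eq_single f] <;> simp +contextual

def Fire (l : E → Fin d → ℚ) : Finset (Fin d) → List E → Prop
  | _, [] => True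
  | P, e :: r => (∀ c, l e c < 0 → c ∈ P) ∧
      Fire l (P ∪ Finset.univ.filter (fun c => 0 < l e c)) r

theorem fire_of_run {l : E → Fin d → ℚ} {x y π w} (h : WRun l x π w y) :
    ∀ P : Finset (Fin d), (∀ c, 0 < x c → c ∈ P) → Fire l P π := by
  induction h with
  | nil x hx => intro P _; trivial
  | @cons x y f r w a hx ha ha1 h ih =>
    intro P hP
    have h0 := h.left_nn
    simp only [Pi.add_apply, Pi.smul_apply, smul_eq_mul] at h0
    refine ⟨fun c hc => hP c ?_, ih _ fun c hc => ?_⟩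
    · have := h0 c
      nlinarith [mul_pos ha (neg_pos.2 hc)]
    · simp only [Pi.add_apply, Pi.smul_apply, smul_eq_mul] at hc
      simp only [Finset.mem_union, Finset.mem_filter, Finset.mem_univ, true_and]
      by_cases hl : 0 < l f c
      · exact Or.inr hl
      · left
        apply hP
        nlinarith

theorem fire_mono {l : E → Fin d → ℚ} {π : List E} : ∀ {P P' : Finset (Fin d)}, P ⊆ P' →
    Fire l P π → Fire l P' π := by
  induction π with
  | nil => intros; trivial
  | cons e r ih =>
    intro P P' hPP h
    exact ⟨fun c hc => hPP (h.1 c hc), ih (Finset.union_subset_union_left hPP) h.2⟩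

theorem fire_neg {l : E → Fin d → ℚ} {π : List E} : ∀ {P : Finset (Fin d)},
    Fire l P π → ∀ e ∈ π, ∀ c, l e c < 0 → c ∈ P ∨ ∃ f ∈ π, 0 < l f c := by
  induction π with
  | nil => simp
  | cons e r ih =>
    intro P h f hf c hc
    rcases List.mem_cons.1 hf with rfl | hf
    · exact Or.inl (h.1 c hc)
    · rcases ih h.2 f hf c hc with h1 | ⟨g, hg, h1⟩
      · simp at h1
        rcases h1 with h1 | h1
        · exact Or.inl h1
        · exact Or.inr ⟨e, by simp, h1⟩
      · exact Or.inr ⟨g, by simp [hg], h1⟩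

theorem fire_app {l : E → Fin d → ℚ} {a b : List E} : ∀ {P : Finset (Fin d)},
    Fire l P a → (∀ e ∈ b, ∀ c, l e c < 0 → c ∈ P ∨ ∃ f ∈ a, 0 < l f c) →
    Fire l P (a ++ b) := by
  induction a with
  | nil =>
    simp only [List.nil_append]
    intro P _
    induction b generalizing P with
    | nil => intros; trivial
    | cons e r ih =>
      intro h
      refine ⟨fun c hc => by simpa using h e (by simp) c hc, ih trivial fun f hf c hc => ?_⟩
      have := h f (by simp [hf]) c hc
      simp at this
      simp [this]
  | cons e r ih =>
    intro P h hb
    refine ⟨h.1, ih h.2 fun f hf c hc => ?_⟩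
    rcases hb f hf c hc with h1 | ⟨g, hg, h1⟩
    · simp [h1]
    · rcases List.mem_cons.1 hg with rfl | hg
      · simp [h1]
      · exact Or.inr ⟨g, hg, h1⟩

theorem fire_join {l : E → Fin d → ℚ} {a b : List E} : ∀ {P : Finset (Fin d)},
    Fire l P a → Fire l P b → Fire l P (a ++ b) := by
  induction a with
  | nil => intro P _ h; exact h
  | cons e r ih =>
    intro P h hb
    exact ⟨h.1, ih h.2 (fire_mono Finset.subset_union_left hb)⟩

theorem fire_split {l : E → Fin d → ℚ} {a b : List E} : ∀ {P : Finset (Fin d)},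
    Fire l P (a ++ b) → (∀ e ∈ a, ∀ c, 0 < l e c → c ∈ P) → Fire l P a ∧ Fire l P b := by
  induction a with
  | nil => intro P h _; exact ⟨trivial, h⟩
  | cons e r ih =>
    intro P h hb
    have hP : P ∪ Finset.univ.filter (fun c => 0 < l e c) = P := by
      apply Finset.union_eq_left.2
      intro c hc
      exact hb e (by simp) c (by simpa using hc)
    have h2 := h.2
    change Fire l _ (r ++ b) at h2
    rw [hP] at h2
    have := ih h2 (fun f hf => hb f (by simp [hf]))
    refine ⟨⟨h.1, ?_⟩, this.2⟩
    rw [hP]; exact this.1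

theorem exists_small {ι : Type} (S : Finset ι) (u v : ι → ℚ) (ε : ℚ) (hε : 0 < ε)
    (hu : ∀ i ∈ S, 0 < u i) : ∃ a, 0 < a ∧ a ≤ ε ∧ ∀ i ∈ S, 0 < u i + a * v i := by
  classical
  induction S using Finset.induction_on with
  | empty => exact ⟨ε, hε, le_rfl, by simp⟩
  | insert i S hi ih =>
    obtain ⟨a, ha, hae, h⟩ := ih (fun j hj => hu j (by simp [hj]))
    have hui := hu i (by simp)
    have hb : 0 < u i / (|v i| + 1) := by positivity
    refine ⟨min a (u i / (|v i| + 1)), lt_min ha hb, (min_le_left _ _).trans hae, ?_⟩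
    have hm : 0 < min a (u i / (|v i| + 1)) := lt_min ha hb
    intro j hj
    rcases Finset.mem_insert.1 hj with rfl | hj
    · have h1 := min_le_right a (u j / (|v j| + 1))
      rw [le_div_iff₀ (by positivity)] at h1
      have h2 := neg_abs_le (v j)
      nlinarith
    · have h1 := h j hj
      have h2 := min_le_left a (u i / (|v i| + 1))
      have h3 := hu j (by simp [hj])
      by_cases hv : 0 ≤ v j
      · positivity
      · push Not at hv
        nlinarith

theorem realize {l : E → Fin d → ℚ} {π : List E} : ∀ {P : Finset (Fin d)} {x : Fin d → ℚ} {ε : ℚ},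
    Fire l P π → (∀ i, 0 ≤ x i) → (∀ c ∈ P, 0 < x c) → 0 < ε →
    ∃ w y, WRun l x π w y ∧ (∀ e, w e ≤ ε) ∧
      ∀ c, (c ∈ P ∨ ∃ e ∈ π, 0 < l e c) → 0 < y c := by
  induction π with
  | nil =>
    intro P x ε _ hx hP hε
    exact ⟨0, x, WRun.nil x hx, fun _ => hε.le, fun c hc => hP c (by simpa using hc)⟩
  | cons e r ih =>
    intro P x ε h hx hP hε
    obtain ⟨a, ha, hae, hs⟩ := exists_small P x (l e) (min (ε / 2) 1)
      (lt_min (by linarith) one_pos) hP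
    have ha1 : a ≤ 1 := hae.trans (min_le_right _ _)
    have ha2 : a ≤ ε / 2 := hae.trans (min_le_left _ _)
    obtain ⟨w, y, hr, hw, hy⟩ := ih (x := x + a • l e) (ε := ε / 2) h.2 (by
        intro i
        simp only [Pi.add_apply, Pi.smul_apply, smul_eq_mul]
        by_cases hi : i ∈ P
        · exact (hs i hi).le
        · have h1 : ¬ l e i < 0 := fun hc => hi (h.1 i hc)
          push Not at h1
          have := hx i
          positivity) (by
        intro i hi
        simp only [Pi.add_apply, Pi.smul_apply, smul_eq_mul]
        by_cases hiP : i ∈ P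
        · exact hs i hiP
        · simp [hiP] at hi
          have := hx i
          positivity) (by linarith)
    refine ⟨_, y, WRun.cons a hx ha ha1 hr, fun f => ?_, fun c hc => hy c ?_⟩
    · have := hw f
      by_cases hf : f = e
      · subst hf; simp; linarith
      · simp [hf]; linarith
    · rcases hc with hc | ⟨f, hf, hc⟩
      · simp [hc]
      · rcases List.mem_cons.1 hf with rfl | hf
        · simp [hc]
        · exact Or.inr ⟨f, hf, hc⟩

section paths
variable {s t : E → Q}

theorem Pth.append {a b : List E} {p q r : Q} (h : Pth s t p a q) (h2 : Pth s t q b r) :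
    Pth s t p (a ++ b) r := by
  induction a generalizing p with
  | nil => cases h; exact h2
  | cons e a ih => exact ⟨h.1, ih h.2⟩

theorem Pth.split {a b : List E} {p r : Q} (h : Pth s t p (a ++ b) r) :
    ∃ q, Pth s t p a q ∧ Pth s t q b r := by
  induction a generalizing p with
  | nil => exact ⟨p, rfl, h⟩
  | cons e a ih =>
    obtain ⟨q, h1, h2⟩ := ih h.2
    exact ⟨q, ⟨h.1, h1⟩, h2⟩

theorem Pth.rev {a : List E} {p q : Q} (h : Pth s t p a q) : Pth t s q a.reverse p := by
  induction a generalizing p with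
  | nil => exact (show p = q from h).symm
  | cons e a ih =>
    rw [List.reverse_cons]
    exact (ih h.2).append ⟨rfl, h.1⟩

theorem pth_suffix {r : List E} : ∀ {a p q : Q}, Pth s t a r q → p ∈ a :: r.map t →
    ∃ r', r' ⊆ r ∧ Pth s t p r' q ∧ (p :: r'.map t) <:+ (a :: r.map t) := by
  induction r with
  | nil =>
    intro a p q h hp
    simp at hp
    subst hp
    exact ⟨[], by simp, h, by simp⟩
  | cons e r ih =>
    intro a p q h hp
    by_cases hpa : p = a
    · subst hpa
      exact ⟨e :: r, by simp, h, List.suffix_rfl⟩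
    · have hp' : p ∈ t e :: r.map t := by simpa [hpa] using hp
      obtain ⟨r', h1, h2, h3⟩ := ih h.2 hp'
      exact ⟨r', fun x hx => List.mem_cons_of_mem _ (h1 hx), h2, h3.trans (List.suffix_cons _ _)⟩

theorem pth_simple {r : List E} : ∀ {p q : Q}, Pth s t p r q →
    ∃ r', r' ⊆ r ∧ Pth s t p r' q ∧ (p :: r'.map t).Nodup := by
  induction r with
  | nil => intro p q h; exact ⟨[], by simp, h, by simp⟩
  | cons e r ih =>
    intro p q h
    obtain ⟨r', h1, h2, h3⟩ := ih h.2
    by_cases hp : p ∈ t e :: r'.map t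
    · obtain ⟨r'', h4, h5, h6⟩ := pth_suffix h2 hp
      exact ⟨r'', fun x hx => List.mem_cons_of_mem _ (h1 (h4 hx)), h5, h3.sublist h6.sublist⟩
    · exact ⟨e :: r', List.cons_subset_cons _ h1, ⟨h.1, h2⟩, List.nodup_cons.2 ⟨hp, h3⟩⟩

theorem pth_short [Fintype Q] {r : List E} {p q : Q} (h : Pth s t p r q) :
    ∃ r', r' ⊆ r ∧ Pth s t p r' q ∧ r'.length + 1 ≤ Fintype.card Q := by
  obtain ⟨r', h1, h2, h3⟩ := pth_simple h
  refine ⟨r', h1, h2, ?_⟩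
  simpa using h3.length_le_card

theorem first_split {p : E → Prop} {C : List E} : (∃ e ∈ C, ¬ p e) →
    ∃ A e B, C = A ++ e :: B ∧ (∀ a ∈ A, p a) ∧ ¬ p e := by
  induction C with
  | nil => simp
  | cons e C ih =>
    intro h
    by_cases he : p e
    · obtain ⟨f, hf, hpf⟩ := h
      have : ∃ e ∈ C, ¬ p e := by
        rcases List.mem_cons.1 hf with rfl | hf
        · exact absurd he hpf
        · exact ⟨f, hf, hpf⟩
      obtain ⟨A, g, B, h1, h2, h3⟩ := ih this
      exact ⟨e :: A, g, B, by simp [h1], by simpa [he] using h2, h3⟩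
    · exact ⟨[], e, C, rfl, by simp, he⟩

theorem shorten [Fintype Q] {l : E → Fin d → ℚ} (m : ℕ) : ∀ {P : Finset (Fin d)} {C : List E}
    {p q : Q}, (Pᶜ).card ≤ m → Pth s t p C q → Fire l P C →
    ∃ φ, φ ⊆ C ∧ Pth s t p φ q ∧ Fire l P φ ∧
      (∀ c, (∃ e ∈ C, 0 < l e c) → c ∈ P ∨ ∃ e ∈ φ, 0 < l e c) ∧
      φ.length ≤ (m + 1) * Fintype.card Q := by
  induction m with
  | zero =>
    intro P C p q hm hC hF
    have hall : ∀ c, c ∈ P := by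
      intro c
      by_contra hc
      have : Pᶜ = ∅ := by simpa using hm
      have h2 : c ∈ Pᶜ := by simpa using hc
      simp [this] at h2
    obtain ⟨φ, h1, h2, h3⟩ := pth_short hC
    refine ⟨φ, h1, h2, ?_, fun c _ => Or.inl (hall c), by omega⟩
    exact fire_app (a := []) trivial fun _ _ c _ => Or.inl (hall c)
  | succ m ih =>
    intro P C p q hm hC hF
    by_cases hex : ∃ e ∈ C, ¬ (∀ c, 0 < l e c → c ∈ P)
    · obtain ⟨A, e, B, rfl, hA, he⟩ := first_split hex
      obtain ⟨FA, FB⟩ := fire_split hF hA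
      obtain ⟨r, PA, PB⟩ := hC.split
      obtain ⟨A', h1, h2, h3⟩ := pth_short PA
      have hcard : ((P ∪ Finset.univ.filter (fun c => 0 < l e c))ᶜ).card ≤ m := by
        push Not at he
        obtain ⟨c, hc, hcP⟩ := he
        have : ((P ∪ Finset.univ.filter (fun c => 0 < l e c))ᶜ).card < (Pᶜ).card := by
          apply Finset.card_lt_card
          refine ⟨fun x hx => ?_, fun hs => ?_⟩
          · simp at hx ⊢; exact hx.1
          · have := hs (show c ∈ Pᶜ by simpa using hcP)
            simp at this
            linarith [this.2]
        omega
      obtain ⟨B', g1, g2, g3, g4, g5⟩ := ih hcard PB.2 FB.2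
      refine ⟨A' ++ e :: B', ?_, h2.append ⟨PB.1, g2⟩, ?_, ?_, ?_⟩
      · intro f hf
        simp only [List.mem_append, List.mem_cons] at hf ⊢
        rcases hf with hf | hf | hf
        · exact Or.inl (h1 hf)
        · exact Or.inr (Or.inl hf)
        · exact Or.inr (Or.inr (g1 hf))
      · refine fire_join ?_ ⟨FB.1, g3⟩
        refine fire_app (a := []) trivial fun f hf c hc => Or.inl ?_
        rcases fire_neg FA f (h1 hf) c hc with h | ⟨g, hg, hgc⟩
        · exact h
        · exact hA g hg c hgc
      · rintro c ⟨f, hf, hc⟩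
        simp only [List.mem_append, List.mem_cons] at hf
        rcases hf with hf | rfl | hf
        · exact Or.inl (hA f hf c hc)
        · exact Or.inr ⟨f, by simp, hc⟩
        · rcases g4 c ⟨f, hf, hc⟩ with h | ⟨g, hg, h⟩
          · simp at h
            rcases h with h | h
            · exact Or.inl h
            · exact Or.inr ⟨e, by simp, h⟩
          · exact Or.inr ⟨g, by simp [hg], h⟩
      · simp only [List.length_append, List.length_cons]
        have : (m + 1 + 1) * Fintype.card Q = (m + 1) * Fintype.card Q + Fintype.card Q := by ring
        omega
    · push Not at hex
      obtain ⟨φ, h1, h2, h3⟩ := pth_short hC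
      refine ⟨φ, h1, h2, ?_, fun c ⟨e, he, hc⟩ => Or.inl (hex e he c hc), ?_⟩
      · refine fire_app (a := []) trivial fun f hf c hc => Or.inl ?_
        rcases fire_neg hF f (h1 hf) c hc with h | ⟨g, hg, hgc⟩
        · exact h
        · exact hex g hg c hgc
      · nlinarith

theorem cover [Fintype Q] {C : List E} {p : Q} (hC : Pth s t p C p) (S : Finset E) :
    (∀ e ∈ S, e ∈ C) → ∃ ψ, ψ ⊆ C ∧ (∀ e ∈ S, e ∈ ψ) ∧ Pth s t p ψ p ∧
      ψ.length ≤ S.card * (2 * Fintype.card Q) := by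
  induction S using Finset.induction_on with
  | empty => intro _; exact ⟨[], by simp, by simp, rfl, by simp⟩
  | insert e S he ih =>
    intro hS
    obtain ⟨ψ, h1, h2, h3, h4⟩ := ih fun f hf => hS f (by simp [hf])
    obtain ⟨A, B, hAB⟩ := List.append_of_mem (hS e (by simp))
    rw [hAB] at hC
    obtain ⟨r, PA, PB⟩ := hC.split
    obtain ⟨A', a1, a2, a3⟩ := pth_short PA
    obtain ⟨B', b1, b2, b3⟩ := pth_short PB.2
    refine ⟨(A' ++ e :: B') ++ ψ, ?_, ?_, (Pth.append a2 (b := e :: B') ⟨PB.1, b2⟩).append h3, ?_⟩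
    · intro f hf
      rw [hAB]
      simp only [List.mem_append, List.mem_cons] at hf ⊢
      rcases hf with (hf | hf | hf) | hf
      · exact Or.inl (a1 hf)
      · exact Or.inr (Or.inl hf)
      · exact Or.inr (Or.inr (b1 hf))
      · have := h1 hf
        rw [hAB] at this
        simpa using this
    · intro f hf
      rcases Finset.mem_insert.1 hf with rfl | hf
      · simp
      · simp [h2 f hf]
    · rw [Finset.card_insert_of_notMem he]
      simp only [List.length_append, List.length_cons]
      rw [add_mul, one_mul]
      omega

end paths

theorem single_iter {l : E → Fin d → ℚ} (co : E → ℚ) (a : ℚ) (ha : 0 < a) {π : List E} :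
    ∀ {z : Fin d → ℚ}, (∀ e ∈ π, 0 < co e) → (∀ e ∈ π, a * co e ≤ 1) →
    (∀ c, a * (π.map (fun e => co e * |l e c|)).sum ≤ z c) →
    ∃ w, WRun l z π w (z + a • (π.map (fun e => co e • l e)).sum) := by
  induction π with
  | nil =>
    intro z _ _ hz
    refine ⟨0, ?_⟩
    simp at hz ⊢
    exact WRun.nil z hz
  | cons e r ih =>
    intro z h1 h2 hz
    have hs : ∀ c, 0 ≤ (r.map (fun e => co e * |l e c|)).sum := by
      intro c
      apply List.sum_nonneg
      intro v hv
      obtain ⟨f, hf, rfl⟩ := List.mem_map.1 hv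
      have := h1 f (by simp [hf])
      positivity
    have he := h1 e (by simp)
    simp only [List.map_cons, List.sum_cons] at hz
    obtain ⟨w, hw⟩ := ih (z := z + (a * co e) • l e) (fun f hf => h1 f (by simp [hf]))
      (fun f hf => h2 f (by simp [hf])) (by
        intro c
        have h3 := hz c
        have h4 := neg_abs_le (l e c)
        have h5 : 0 < a * co e := by positivity
        simp only [Pi.add_apply, Pi.smul_apply, smul_eq_mul]
        nlinarith)
    refine ⟨_, WRun.cons (a * co e) ?_ (by positivity) (h2 e (by simp)) (w := w) ?_⟩
    · intro c
      refine le_trans ?_ (hz c)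
      have := hs c
      positivity
    · convert hw using 1
      simp only [List.map_cons, List.sum_cons, smul_add, smul_smul, add_assoc]

theorem middle [Fintype E] {l : E → Fin d → ℚ} {x y : Fin d → ℚ} {π : List E} {w : E → ℚ}
    (hx : ∀ i, 0 ≤ x i) (hy : ∀ i, 0 ≤ y i)
    (hxp : ∀ c, (∃ e ∈ π, l e c ≠ 0) → 0 < x c)
    (hyp : ∀ c, (∃ e ∈ π, l e c ≠ 0) → 0 < y c)
    (hw : ∀ e ∈ π, 0 < w e) (hw0 : ∀ e, e ∉ π → w e = 0)
    (hxy : y = x + ∑ e, w e • l e) :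
    ∃ (k : ℕ) (v : E → ℚ), WRun l x (List.replicate k π).flatten v y := by
  set co : E → ℚ := fun e => w e / (π.count e : ℚ) with hco
  have hcp : ∀ e ∈ π, 0 < co e := by
    intro e he
    have : 0 < π.count e := List.count_pos_iff.2 he
    have := hw e he
    simp only [hco]
    positivity
  have hsum : (π.map (fun e => co e • l e)).sum = ∑ e, w e • l e := by
    rw [Finset.sum_list_map_count]
    rw [← Finset.sum_subset (Finset.subset_univ π.toFinset)]
    · apply Finset.sum_congr rfl
      intro e he
      have : 0 < π.count e := List.count_pos_iff.2 (by simpa using he)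
      have h2 : (π.count e : ℚ) ≠ 0 := by positivity
      rw [← Nat.cast_smul_eq_nsmul ℚ, smul_smul]
      congr 1
      simp only [hco]
      field_simp
    · intro e _ he
      rw [hw0 e (by simpa using he), zero_smul]
  set A : Fin d → ℚ := fun c => (π.map (fun e => co e * |l e c|)).sum with hA
  have hA0 : ∀ c, ¬ (∃ e ∈ π, l e c ≠ 0) → A c = 0 := by
    intro c hc
    push Not at hc
    apply List.sum_eq_zero
    intro v hv
    obtain ⟨f, hf, rfl⟩ := List.mem_map.1 hv
    simp [hc f hf]
  have key : ∀ u : Fin d → ℚ, (∀ i, 0 ≤ u i) → (∀ c, (∃ e ∈ π, l e c ≠ 0) → 0 < u c) →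
      ∀ᶠ k : ℕ in Filter.atTop, ∀ c, A c ≤ k * u c := by
    intro u hu hup
    rw [Filter.eventually_all]
    intro c
    by_cases hc : ∃ e ∈ π, l e c ≠ 0
    · have : Filter.Tendsto (fun k : ℕ => (k : ℚ) * u c) Filter.atTop Filter.atTop :=
        tendsto_natCast_atTop_atTop.atTop_mul_const (hup c hc)
      exact this.eventually_ge_atTop _
    · filter_upwards with k
      rw [hA0 c hc]
      have := hu c
      positivity
  have hk2 : ∀ᶠ k : ℕ in Filter.atTop, ∀ e, co e ≤ k := by
    rw [Filter.eventually_all]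
    intro e
    exact (tendsto_natCast_atTop_atTop (R := ℚ)).eventually_ge_atTop _
  obtain ⟨k, ⟨⟨hkx, hky⟩, hkc⟩, hk0⟩ :=
    (((key x hx hxp).and (key y hy hyp)).and hk2 |>.and (Filter.eventually_gt_atTop 0)).exists
  have hkq : (0 : ℚ) < k := by exact_mod_cast hk0
  have step : ∀ j : ℕ, j ≤ k → ∃ v, WRun l x (List.replicate j π).flatten v
      (x + ((j : ℚ) / k) • (y - x)) := by
    intro j
    induction j with
    | zero => intro _; exact ⟨0, by simpa using WRun.nil x hx⟩
    | succ j ih =>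
      intro hj
      obtain ⟨v, hv⟩ := ih (by omega)
      have hjk : (j : ℚ) + 1 ≤ k := by exact_mod_cast hj
      obtain ⟨v', hv'⟩ := single_iter (l := l) co (1 / (k : ℚ)) (by positivity) (π := π)
        (z := x + ((j : ℚ) / k) • (y - x)) hcp (by
          intro e he
          rw [one_div, inv_mul_le_iff₀ hkq]
          simpa using hkc e) (by
          intro c
          have e1 := hkx c
          have e2 := hky c
          change 1 / (k : ℚ) * A c ≤ _
          rw [one_div, inv_mul_le_iff₀ hkq]
          simp only [Pi.add_apply, Pi.smul_apply, Pi.sub_apply, smul_eq_mul]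
          have h0 : (0 : ℚ) ≤ j := by positivity
          have : (k : ℚ) * (x c + (j : ℚ) / k * (y c - x c)) = (k - j) * x c + j * y c := by
            field_simp
            ring
          rw [this]
          have g1 : 0 ≤ (k - j : ℚ) * (k * x c - A c) :=
            mul_nonneg (by linarith) (by linarith)
          have g2 : 0 ≤ (j : ℚ) * (k * y c - A c) := mul_nonneg h0 (by linarith)
          have g3 : (k : ℚ) * A c ≤ k * ((k - j) * x c + j * y c) := by nlinarith
          exact le_of_mul_le_mul_left g3 hkq)
      refine ⟨v + v', ?_⟩
      have hfl : (List.replicate (j + 1) π).flatten = (List.replicate j π).flatten ++ π := by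
        rw [List.replicate_succ']; simp
      rw [hfl]
      have h3 := hv.append hv'
      convert h3 using 1
      rw [hsum, add_assoc]
      congr 1
      rw [hxy]
      simp only [add_sub_cancel_left]
      rw [← add_smul]
      congr 1
      push_cast
      ring
  obtain ⟨v, hv⟩ := step k le_rfl
  refine ⟨k, v, ?_⟩
  rw [div_self hkq.ne', one_smul, add_sub_cancel] at hv
  exact hv

theorem key_cycle [Fintype E] [Fintype Q] {s t : E → Q} {l : E → Fin d → ℚ} {x y : Fin d → ℚ}
    {C : List E} {w : E → ℚ} {p : Q} (hC : Pth s t p C p) (hrun : WRun l x C w y) :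
    ∃ (χ : List E) (k : ℕ) (v : E → ℚ), (∀ e, e ∈ χ ↔ e ∈ C) ∧ Pth s t p χ p ∧
      χ.length ≤ 2 * ((d + 1) * Fintype.card Q) + C.toFinset.card * (2 * Fintype.card Q) ∧
      WRun l x (List.replicate k χ).flatten v y := by
  have hx := hrun.left_nn
  have hy := hrun.right_nn
  set P : Finset (Fin d) := Finset.univ.filter (fun c => 0 < x c) with hP
  set R : Finset (Fin d) := Finset.univ.filter (fun c => 0 < y c) with hR
  have F1 : Fire l P C := fire_of_run hrun P (by simp [hP])
  have F2 : Fire (fun e => - l e) R C.reverse := fire_of_run hrun.rev R (by simp [hR])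
  have hcd : ∀ P : Finset (Fin d), (Pᶜ).card ≤ d := fun P => by
    simpa using Finset.card_le_univ (Pᶜ)
  obtain ⟨φ, a1, a2, a3, a4, a5⟩ := shorten d (hcd P) hC F1
  obtain ⟨β, b1, b2, b3, b4, b5⟩ := shorten d (hcd R) hC.rev F2
  obtain ⟨ψ, c1, c2, c3, c4⟩ := cover hC C.toFinset (by simp)
  have b1' : ∀ e ∈ β, e ∈ C := fun e he => by simpa using b1 he
  have N1 : ∀ e ∈ C, ∀ c, l e c < 0 → c ∈ P ∨ ∃ f ∈ φ, 0 < l f c := by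
    intro e he c hc
    rcases fire_neg F1 e he c hc with h | h
    · exact Or.inl h
    · exact a4 c h
  have N2 : ∀ e ∈ C, ∀ c, - l e c < 0 → c ∈ R ∨ ∃ f ∈ β, 0 < - l f c := by
    intro e he c hc
    rcases fire_neg F2 e (by simpa using he) c hc with h | h
    · exact Or.inl h
    · exact b4 c h
  set χ := φ ++ ψ ++ β.reverse with hχ
  have hmem : ∀ e, e ∈ χ ↔ e ∈ C := by
    intro e
    simp only [hχ, List.mem_append, List.mem_reverse]
    constructor
    · rintro ((h | h) | h)
      · exact a1 h
      · exact c1 h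
      · exact b1' e h
    · intro h
      exact Or.inl (Or.inr (c2 e (by simpa using h)))
  have G1 : Fire l P χ := by
    rw [hχ, List.append_assoc]
    refine fire_app a3 fun e he => N1 e ((hmem e).1 ?_)
    rw [hχ, List.append_assoc]
    exact List.mem_append_right _ he
  have G2 : Fire (fun e => - l e) R χ.reverse := by
    have : χ.reverse = β ++ (ψ.reverse ++ φ.reverse) := by simp [hχ]
    rw [this]
    refine fire_app b3 fun e he => N2 e ((hmem e).1 ?_)
    simp only [hχ, List.mem_append, List.mem_reverse] at he ⊢
    tauto
  have T1 : ∀ c, (∃ e ∈ χ, l e c ≠ 0) → c ∈ P ∨ ∃ f ∈ χ, 0 < l f c := by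
    rintro c ⟨e, he, hc⟩
    rcases lt_or_gt_of_ne hc with h | h
    · exact fire_neg G1 e he c h
    · exact Or.inr ⟨e, he, h⟩
  have T2 : ∀ c, (∃ e ∈ χ, l e c ≠ 0) → c ∈ R ∨ ∃ f ∈ χ.reverse, 0 < - l f c := by
    rintro c ⟨e, he, hc⟩
    rcases lt_or_gt_of_ne hc with h | h
    · exact Or.inr ⟨e, by simpa using he, by linarith⟩
    · exact fire_neg G2 e (by simpa using he) c (by simp [h])
  obtain ⟨ε, hε, -, hεw⟩ := exists_small C.toFinset w (fun _ => -2) 1 one_pos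
    (fun e he => hrun.pos e (by simpa using he))
  obtain ⟨w1, x', r1, hw1, hx'⟩ := realize G1 hx (by simp [hP]) hε
  obtain ⟨w2, y', r2, hw2, hy'⟩ := realize G2 hy (by simp [hR]) hε
  have r2' := r2.rev
  simp only [neg_neg, List.reverse_reverse] at r2'
  obtain ⟨k, v, hv⟩ := middle (l := l) (π := χ) (w := w - w1 - w2) r1.right_nn r2.right_nn
    (fun c hc => hx' c (T1 c hc)) (fun c hc => hy' c (T2 c hc))
    (fun e he => by
      have := hεw e (by simpa using (hmem e).1 he)
      have h1 := hw1 e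
      have h2 := hw2 e
      simp only [Pi.sub_apply]
      linarith)
    (fun e he => by
      have h0 := hrun.zero e (fun h => he ((hmem e).2 h))
      have h1 := r1.zero e he
      have h2 := r2'.zero e he
      simp [h0, h1, h2])
    (by
      have h0 := hrun.eq
      have h1 := r1.eq
      have h2 := r2'.eq
      simp only [Pi.sub_apply, sub_smul, Finset.sum_sub_distrib]
      rw [h1]
      have : y' = y - ∑ e, w2 e • l e := by rw [h2]; simp
      rw [this, h0]
      abel)
  refine ⟨χ, 1 + k + 1, w1 + v + w2, hmem, (a2.append c3).append (by simpa using b2.rev), ?_, ?_⟩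
  · simp only [hχ, List.length_append, List.length_reverse]
    omega
  · have hfl : (List.replicate (1 + k + 1) χ).flatten
        = χ ++ (List.replicate k χ).flatten ++ χ := by
      rw [List.replicate_succ', Nat.add_comm 1 k, List.replicate_succ]; simp
    rw [hfl]
    exact (r1.append hv).append r2'

end SLPS

namespace SLPS2
open SLPS

variable {d : ℕ} (V : CVASS d)

theorem to_abs {p q : V.Q} {x y : Fin d → ℚ} {π : List (V.Q × V.Q)}
    (h : V.NNRunFrom p x π q y) :
    Pth Prod.fst Prod.snd p π q ∧ (∀ e ∈ π, e ∈ V.T) ∧ ∃ w, WRun V.label x π w y := by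
  induction h with
  | nil p x hx => exact ⟨rfl, by simp, 0, WRun.nil x hx⟩
  | cons hT hx ha ha1 _ ih =>
    obtain ⟨h1, h2, w, h3⟩ := ih
    exact ⟨⟨rfl, h1⟩, by simpa [hT] using h2, _, WRun.cons _ hx ha ha1 h3⟩

theorem of_abs {x y : Fin d → ℚ} {π : List (V.Q × V.Q)} {w}
    (h : WRun V.label x π w y) : ∀ {p q : V.Q}, Pth Prod.fst Prod.snd p π q →
    (∀ e ∈ π, e ∈ V.T) → V.NNRunFrom p x π q y := by
  induction h with
  | nil x hx =>
    intro p q hp _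
    cases hp
    exact .nil _ _ hx
  | @cons x y e r w a hx ha ha1 _ ih =>
    intro p q hp hT
    obtain ⟨e1, e2⟩ := e
    obtain ⟨h1, h2⟩ := hp
    simp only at h1 h2
    subst h1
    exact .cons (hT _ (by simp)) hx ha ha1 (ih h2 fun f hf => hT f (by simp [hf]))

theorem nn_append {p q r : V.Q} {x y z : Fin d → ℚ} {a b : List (V.Q × V.Q)}
    (h : V.NNRunFrom p x a q y) (h2 : V.NNRunFrom q y b r z) :
    V.NNRunFrom p x (a ++ b) r z := by
  induction h with
  | nil => exact h2
  | cons hT hx ha ha1 _ ih => exact .cons hT hx ha ha1 (ih h2)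

theorem path_of {p q : V.Q} {π : List (V.Q × V.Q)} (h : Pth Prod.fst Prod.snd p π q)
    (hT : ∀ e ∈ π, e ∈ V.T) : V.PathFrom p π q := by
  induction π generalizing p with
  | nil => cases h; exact .nil _
  | cons e r ih =>
    obtain ⟨e1, e2⟩ := e
    obtain ⟨h1, h2⟩ := h
    simp only at h1 h2
    subst h1
    exact .cons (hT _ (by simp)) (ih h2 fun f hf => hT f (by simp [hf]))

theorem path_of_run {p q : V.Q} {x y : Fin d → ℚ} {π : List (V.Q × V.Q)}
    (h : V.NNRunFrom p x π q y) : V.PathFrom p π q :=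
  path_of V (to_abs V h).1 (to_abs V h).2.1

inductive L (B : ℕ) : ℕ → V.Q → (Fin d → ℚ) → List (V.Q × V.Q) → V.Q → (Fin d → ℚ) → Prop
  | last {p q : V.Q} {x y : Fin d → ℚ} {π : List (V.Q × V.Q)} : SimplePath p π →
      V.NNRunFrom p x π q y → L B 0 p x π q y
  | cyc {p q r : V.Q} {x y z z' : Fin d → ℚ} {π π1 χ : List (V.Q × V.Q)} {n k : ℕ} :
      SimplePath p π → V.NNRunFrom p x π r z → V.PathFrom r χ r → χ ≠ [] → χ.length ≤ B →
      V.NNRunFrom r z (List.replicate k χ).flatten r z' → L B n r z' π1 q y →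
      L B (n + 1) p x π q y

theorem L.prepend {B n : ℕ} {p p' q : V.Q} {x y : Fin d → ℚ} {a : ℚ} {π : List (V.Q × V.Q)}
    (hT : (p, p') ∈ V.T) (hx : ∀ i, 0 ≤ x i) (ha : 0 < a) (ha1 : a ≤ 1)
    (h : L V B n p' (x + a • V.label (p, p')) π q y)
    (hp : p ≠ p') (hπ : ∀ e ∈ π, e.2 ≠ p) : L V B n p x ((p, p') :: π) q y := by
  have hs : SimplePath p' π → SimplePath p ((p, p') :: π) := by
    intro h
    refine List.nodup_cons.2 ⟨?_, h⟩
    intro hm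
    simp only [List.map_cons, List.mem_cons, List.mem_map] at hm
    rcases hm with hm | ⟨e, he, hm⟩
    · exact hp hm
    · exact hπ e he hm
  cases h with
  | last h1 h2 => exact .last (hs h1) (.cons hT hx ha ha1 h2)
  | cyc h1 h2 h3 h4 h5 h6 h7 => exact .cyc (hs h1) (.cons hT hx ha ha1 h2) h3 h4 h5 h6 h7

theorem last_split {p q : V.Q} {π : List (V.Q × V.Q)} :
    ∀ {r : V.Q}, Pth Prod.fst Prod.snd r π q → (∃ e ∈ π, e.2 = p) →
    ∃ C R, π = C ++ R ∧ C ≠ [] ∧ Pth Prod.fst Prod.snd r C p ∧ Pth Prod.fst Prod.snd p R q ∧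
      ∀ e ∈ R, e.2 ≠ p := by
  induction π with
  | nil => simp
  | cons e π ih =>
    intro r h hex
    by_cases h2 : ∃ e ∈ π, e.2 = p
    · obtain ⟨C, R, h3, _, h4, h5, h6⟩ := ih h.2 h2
      exact ⟨e :: C, R, by simp [h3], by simp, ⟨h.1, h4⟩, h5, h6⟩
    · have he : e.2 = p := by
        obtain ⟨f, hf, hfp⟩ := hex
        rcases List.mem_cons.1 hf with rfl | hf
        · exact hfp
        · exact absurd ⟨f, hf, hfp⟩ h2
      push Not at h2
      exact ⟨[e], π, rfl, by simp, ⟨h.1, he⟩, by rw [← he]; exact h.2, h2⟩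

theorem decomp (B : ℕ)
    (hB : ∀ C : List (V.Q × V.Q), (∀ e ∈ C, e ∈ V.T) →
      2 * ((d + 1) * Fintype.card V.Q) + C.toFinset.card * (2 * Fintype.card V.Q) ≤ B)
    (N : ℕ) : ∀ {p q : V.Q} {x y : Fin d → ℚ} {π : List (V.Q × V.Q)} {w} {U : Finset V.Q},
    U.card ≤ N → p ∈ U → (∀ e ∈ π, e.2 ∈ U) → (∀ e ∈ π, e ∈ V.T) →
    Pth Prod.fst Prod.snd p π q → WRun V.label x π w y →
    ∃ n ≤ U.card, ∃ π0, (∀ e ∈ π0, e.2 ∈ U) ∧ L V B n p x π0 q y := by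
  induction N with
  | zero =>
    intro p q x y π w U hU hp
    have : U = ∅ := by simpa using hU
    simp [this] at hp
  | succ N ih =>
    intro p q x y π w U hU hp hπU hT hP hW
    have hcard : (U.erase p).card + 1 = U.card := Finset.card_erase_add_one hp
    have tail : ∀ {x : Fin d → ℚ} {R : List (V.Q × V.Q)} {w}, (∀ e ∈ R, e.2 ∈ U) →
        (∀ e ∈ R, e ∈ V.T) → (∀ e ∈ R, e.2 ≠ p) →
        Pth Prod.fst Prod.snd p R q → WRun V.label x R w y →
        ∃ n, n + 1 ≤ U.card ∧ ∃ π0, (∀ e ∈ π0, e.2 ∈ U) ∧ L V B n p x π0 q y := by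
      intro x R w hRU hRT hRp hRP hRW
      cases hRW with
      | nil _ hx =>
        cases hRP
        exact ⟨0, by omega, [], by simp, .last (by simp [SimplePath, pathStates]) (.nil _ _ hx)⟩
      | @cons _ _ e r w a hx ha ha1 hW =>
        obtain ⟨e1, e2⟩ := e
        obtain ⟨h1, h2⟩ := hRP
        simp only at h1 h2
        subst h1
        have he2 : e2 ≠ e1 := hRp (e1, e2) (by simp)
        obtain ⟨n, hn, π0, h3, h4⟩ := ih (U := U.erase e1) (by omega)
          (by simp [he2, hRU (e1, e2)])
          (fun f hf => Finset.mem_erase.2 ⟨hRp f (by simp [hf]), hRU f (by simp [hf])⟩)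
          (fun f hf => hRT f (by simp [hf])) h2 hW
        refine ⟨n, by omega, (e1, e2) :: π0, ?_, L.prepend V (hRT _ (by simp)) hx ha ha1 h4
          he2.symm (fun f hf => (Finset.mem_erase.1 (h3 f hf)).1)⟩
        intro f hf
        rcases List.mem_cons.1 hf with rfl | hf
        · exact hRU _ (by simp)
        · exact (Finset.mem_erase.1 (h3 f hf)).2
    by_cases hex : ∃ e ∈ π, e.2 = p
    · obtain ⟨C, R, rfl, hne, hC, hR, hRp⟩ := last_split V hP hex
      obtain ⟨z, w1, w2, W1, W2⟩ := hW.split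
      obtain ⟨n, hn, π1, g1, g2⟩ := tail (fun e he => hπU e (by simp [he]))
        (fun e he => hT e (by simp [he])) hRp hR W2
      have hCT : ∀ e ∈ C, e ∈ V.T := fun e he => hT e (by simp [he])
      obtain ⟨χ, k, v, k1, k2, k3, k4⟩ := key_cycle hC W1
      have hχT : ∀ e ∈ χ, e ∈ V.T := fun e he => hCT e ((k1 e).1 he)
      have hrep : ∀ k : ℕ, Pth Prod.fst Prod.snd p (List.replicate k χ).flatten p := by
        intro k
        induction k with
        | zero => exact rfl
        | succ k ihk =>
          rw [List.replicate_succ, List.flatten_cons]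
          exact k2.append ihk
      refine ⟨n + 1, hn, [], by simp, .cyc (by simp [SimplePath, pathStates])
        (.nil _ _ hW.left_nn) (path_of V k2 hχT) ?_ (k3.trans (hB C hCT)) (of_abs V k4 (hrep k) ?_) g2⟩
      · rintro rfl
        obtain ⟨e, he⟩ := List.exists_mem_of_ne_nil C hne
        simpa using (k1 e).2 he
      · intro e he
        simp only [List.mem_flatten, List.mem_replicate] at he
        obtain ⟨l, ⟨_, rfl⟩, hl⟩ := he
        exact hχT e hl
    · push Not at hex
      obtain ⟨n, hn, h⟩ := tail hπU hT hex hP hW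
      exact ⟨n, by omega, h⟩

theorem assemble {B n : ℕ} {p q : V.Q} {x y : Fin d → ℚ} {π0 : List (V.Q × V.Q)}
    (h : L V B n p x π0 q y) :
    ∃ (s : Fin (n + 2) → V.Q) (πs : Fin (n + 1) → List (V.Q × V.Q))
      (χs : Fin n → List (V.Q × V.Q)),
      s 0 = p ∧ s (Fin.last (n + 1)) = q ∧
      (∀ i : Fin (n + 1), V.PathFrom (s i.castSucc) (πs i) (s i.succ)) ∧
      (∀ i : Fin (n + 1), SimplePath (s i.castSucc) (πs i)) ∧
      (∀ i : Fin n, V.PathFrom (s i.succ.castSucc) (χs i) (s i.succ.castSucc) ∧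
        χs i ≠ []) ∧
      (∀ i : Fin n, (χs i).length ≤ B) ∧
      (∃ ks : Fin n → ℕ, V.NNRunFrom p x (lpsConcat πs χs ks) q y) := by
  induction h with
  | @last p q x y π h1 h2 =>
    refine ⟨![p, q], fun _ => π, Fin.elim0, rfl, rfl, ?_, ?_, fun i => i.elim0, fun i => i.elim0,
      Fin.elim0, ?_⟩
    · intro i
      have : i = 0 := by ext; simp
      subst this
      exact path_of_run V h2
    · intro i
      have : i = 0 := by ext; simp
      subst this
      exact h1
    · simpa [lpsConcat] using h2
  | @cyc p q r x y z z' π π1 χ n k h1 h2 h3 h4 h5 h6 _ ih =>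
    obtain ⟨s, πs, χs, a1, a2, a3, a4, a5, a6, ks, a7⟩ := ih
    refine ⟨Fin.cons p s, Fin.cons π πs, Fin.cons χ χs, rfl, ?_, ?_, ?_, ?_, ?_,
      Fin.cons k ks, ?_⟩
    · rw [← Fin.succ_last, Fin.cons_succ]; exact a2
    · intro i
      refine Fin.cases ?_ (fun i => ?_) i
      · simp only [Fin.castSucc_zero, Fin.cons_zero, Fin.cons_succ, a1]
        exact path_of_run V h2
      · simp only [← Fin.succ_castSucc, Fin.cons_succ]
        exact a3 i
    · intro i
      refine Fin.cases ?_ (fun i => ?_) i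
      · exact h1
      · simp only [← Fin.succ_castSucc, Fin.cons_succ]
        exact a4 i
    · intro i
      refine Fin.cases ?_ (fun i => ?_) i
      · simp only [← Fin.succ_castSucc, Fin.cons_succ, Fin.cons_zero, Fin.castSucc_zero, a1]
        exact ⟨h3, h4⟩
      · simp only [← Fin.succ_castSucc, Fin.cons_succ]
        exact a5 i
    · intro i
      refine Fin.cases ?_ (fun i => ?_) i
      · exact h5
      · exact a6 i
    · have : lpsConcat (Fin.cons π πs : Fin (n + 1 + 1) → List (V.Q × V.Q)) (Fin.cons χ χs)
          (Fin.cons k ks) = π ++ ((List.replicate k χ).flatten ++ lpsConcat πs χs ks) := by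
        simp [lpsConcat, List.ofFn_succ]
      rw [this]
      exact nn_append V h2 (nn_append V h6 a7)

end SLPS2

/-- short linear path schemes suffice for ℚ≥0VASS
reachability. If `p(x) →^π q(y)` in the nonnegative semantics, then there is
a linear path scheme `σ = π₀ χ₁* π₁ ⋯ χₙ* πₙ` from `p` to `q` with `n ≤ |Q|`,
simple paths `πs`, cycles of length at most
`4·|Q|·(|T| + d + 2)·(d·|T|^(d+1) + 1)`, and `y ∈ Reach^x_{≥0}(σ)`. -/
theorem short_lps_suffice_nonneg {d : ℕ} (V : CVASS d) (p q : V.Q)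
    (x y : Fin d → ℚ) (hx : ∀ i, 0 ≤ x i) (hy : ∀ i, 0 ≤ y i)
    (π : List (V.Q × V.Q)) (hπ : V.PathFrom p π q)
    (hrun : V.NNRunFrom p x π q y) :
    ∃ (n : ℕ) (s : Fin (n + 2) → V.Q) (πs : Fin (n + 1) → List (V.Q × V.Q))
      (χs : Fin n → List (V.Q × V.Q)),
      n ≤ Fintype.card V.Q ∧
      s 0 = p ∧ s (Fin.last (n + 1)) = q ∧
      (∀ i : Fin (n + 1), V.PathFrom (s i.castSucc) (πs i) (s i.succ)) ∧
      (∀ i : Fin (n + 1), SimplePath (s i.castSucc) (πs i)) ∧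
      (∀ i : Fin n, V.PathFrom (s i.succ.castSucc) (χs i) (s i.succ.castSucc) ∧
        χs i ≠ []) ∧
      (∀ i : Fin n, (χs i).length ≤
        4 * Fintype.card V.Q * (V.T.card + d + 2) * (d * V.T.card ^ (d + 1) + 1)) ∧
      (∃ ks : Fin n → ℕ, V.NNRunFrom p x (lpsConcat πs χs ks) q y) := by
  obtain ⟨hP, hT, w, hW⟩ := SLPS2.to_abs V hrun
  obtain ⟨n, hn, π0, -, hL⟩ := SLPS2.decomp V
    (4 * Fintype.card V.Q * (V.T.card + d + 2) * (d * V.T.card ^ (d + 1) + 1)) (by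
      intro C hC
      have h1 : C.toFinset.card ≤ V.T.card :=
        Finset.card_le_card fun e he => hC e (by simpa using he)
      have h2 : 4 * Fintype.card V.Q * (V.T.card + d + 2) * 1 ≤
          4 * Fintype.card V.Q * (V.T.card + d + 2) * (d * V.T.card ^ (d + 1) + 1) :=
        Nat.mul_le_mul_left _ (by omega)
      have h3 : C.toFinset.card * (2 * Fintype.card V.Q) ≤
          V.T.card * (2 * Fintype.card V.Q) := Nat.mul_le_mul_right _ h1
      nlinarith)
    _ (U := Finset.univ) le_rfl (Finset.mem_univ p) (fun _ _ => Finset.mem_univ _) hT hP hW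
  obtain ⟨s, πs, χs, h1, h2, h3, h4, h5, h6, h7⟩ := SLPS2.assemble V hL
  exact ⟨n, s, πs, χs, hn, h1, h2, h3, h4, h5, h6, h7⟩
end

section
/- Let u ∈ ℚ^d, let c : Fin n → ℚ with c i ≥ 0 for all i, and set g i = c i • u. Then {∑_i a_i • g i | a : Fin n → ℚ, ∀ i, 0 < a_i ≤ 1} = {t • (∑_i g i) | t ∈ ℚ, 0 < t ≤ 1}. (Core grouping fact behind Lemma 3 and the construction of G_M: a family of vectors lying on one common ray, taken each with a coefficient in (0,1], has the same set of reachable sums as their total sum taken with a single coefficient in (0,1].) -/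
/-- grouping collinear vectors on a common ray. If
`g i = c i • u` with `c i ≥ 0`, then the set of combinations
`∑ i, a i • g i` with all `a i ∈ (0,1]` equals the set of multiples
`t • (∑ i, g i)` with `t ∈ (0,1]`. -/
theorem ray_grouping (d n : ℕ) (u : Fin d → ℚ) (c : Fin n → ℚ)
    (hc : ∀ i, 0 ≤ c i) (g : Fin n → (Fin d → ℚ)) (hg : ∀ i, g i = c i • u) :
    {x : Fin d → ℚ | ∃ a : Fin n → ℚ, (∀ i, 0 < a i ∧ a i ≤ 1) ∧
        x = ∑ i, a i • g i} =
      {x : Fin d → ℚ | ∃ t : ℚ, 0 < t ∧ t ≤ 1 ∧ x = t • ∑ i, g i} := by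
  have hG : ∑ i, g i = (∑ i, c i) • u := by
    rw [Finset.sum_smul]
    exact Finset.sum_congr rfl (fun i _ => hg i)
  ext x
  simp only [Set.mem_setOf_eq]
  constructor
  · rintro ⟨a, ha, rfl⟩
    have hA : ∑ i, a i • g i = (∑ i, a i * c i) • u := by
      rw [Finset.sum_smul]
      exact Finset.sum_congr rfl (fun i _ => by rw [hg i, smul_smul])
    rw [hG, hA]
    have hS : 0 ≤ ∑ i, c i := Finset.sum_nonneg (fun i _ => hc i)
    rcases hS.eq_or_lt with h0 | hpos
    · have hz : ∀ i, c i = 0 := fun i =>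
        (Finset.sum_eq_zero_iff_of_nonneg (fun i _ => hc i)).1 h0.symm i (Finset.mem_univ i)
      refine ⟨1, one_pos, le_refl _, ?_⟩
      simp [hz]
    · refine ⟨(∑ i, a i * c i) / ∑ i, c i, ?_, ?_, ?_⟩
      · apply div_pos _ hpos
        obtain ⟨j, hj, hcj⟩ := Finset.exists_lt_of_sum_lt
          (s := Finset.univ) (f := fun _ : Fin n => (0 : ℚ)) (g := c) (by simpa using hpos)
        exact Finset.sum_pos' (fun i _ => mul_nonneg (ha i).1.le (hc i))
          ⟨j, hj, mul_pos (ha j).1 hcj⟩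
      · rw [div_le_one hpos]
        exact Finset.sum_le_sum (fun i _ => mul_le_of_le_one_left (hc i) (ha i).2)
      · rw [smul_smul, div_mul_cancel₀ _ hpos.ne']
  · rintro ⟨t, h0, h1, rfl⟩
    exact ⟨fun _ => t, fun _ => ⟨h0, h1⟩, Finset.smul_sum⟩
end

section
/- Let σ = π₀χ₁*π₁⋯χₙ*πₙ be a linear path scheme over a continuous VASS of dimension d (ℚ-semantics). Then Reach(σ) = Reach(π₀π₁⋯πₙ) + ∑_{i=1}^n Reach(χ_i*), where + denotes iterated Minkowski sum. (Lemma: the reachability set of an LPS is the Minkowski sum of the reachability set of its concatenated path part and the reachability sets of its cycles.) -/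
open Pointwise

namespace LPSProof

variable {d : ℕ} (V : CVASS d)

def E (t : V.Q × V.Q) : Set (Fin d → ℚ) := {v | ∃ α : ℚ, 0 < α ∧ α ≤ 1 ∧ v = α • V.label t}

def W (l : List (V.Q × V.Q)) : Set (Fin d → ℚ) := (l.map (E V)).sum

theorem W_append (a b : List (V.Q × V.Q)) : W V (a ++ b) = W V a + W V b := by
  simp [W]

theorem W_flatten_ofFn {n : ℕ} (f : Fin n → List (V.Q × V.Q)) :
    W V (List.ofFn f).flatten = ∑ i, W V (f i) := by
  induction n with
  | zero => simp [W]
  | succ n ih => rw [List.ofFn_succ, List.flatten_cons, W_append, ih, Fin.sum_univ_succ]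

theorem run_iff (l : List (V.Q × V.Q)) (p q : V.Q) (x y : Fin d → ℚ) :
    V.RunFrom p x l q y ↔ V.PathFrom p l q ∧ y - x ∈ W V l := by
  constructor
  · intro h
    induction h with
    | nil p x => exact ⟨.nil p, by simp [W]⟩
    | @cons p q r x y α rest ht h0 h1 _ ih =>
      refine ⟨.cons ht ih.1, ?_⟩
      have : W V ((p, q) :: rest) = E V (p, q) + W V rest := by simp [W]
      rw [this]
      exact Set.mem_add.2 ⟨_, ⟨α, h0, h1, rfl⟩, _, ih.2, by abel⟩
  · rintro ⟨hp, hw⟩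
    induction hp generalizing x with
    | nil p =>
      have : y = x := by simpa [W, sub_eq_zero] using hw
      subst this
      exact .nil _ _
    | @cons p q r rest ht _ ih =>
      have : W V ((p, q) :: rest) = E V (p, q) + W V rest := by simp [W]
      rw [this] at hw
      obtain ⟨_, ⟨α, h0, h1, rfl⟩, b, hb, hab⟩ := Set.mem_add.1 hw
      refine .cons ht h0 h1 (ih _ ?_)
      have : y - (x + α • V.label (p, q)) = b := by
        rw [← sub_sub, ← hab]; abel
      rwa [this]

theorem path_append {a b : List (V.Q × V.Q)} {p q r : V.Q}
    (h : V.PathFrom p a q) (h' : V.PathFrom q b r) : V.PathFrom p (a ++ b) r := by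
  induction h with
  | nil p => exact h'
  | cons ht _ ih => exact .cons ht (ih h')

theorem path_rep {a : List (V.Q × V.Q)} {p : V.Q}
    (h : V.PathFrom p a p) (k : ℕ) : V.PathFrom p (List.replicate k a).flatten p := by
  induction k with
  | zero => exact .nil p
  | succ k ih => exact path_append V h ih

theorem path_ofFn {n : ℕ} (s : Fin (n + 1) → V.Q) (f : Fin n → List (V.Q × V.Q))
    (h : ∀ i : Fin n, V.PathFrom (s i.castSucc) (f i) (s i.succ)) :
    V.PathFrom (s 0) (List.ofFn f).flatten (s (Fin.last n)) := by
  induction n with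
  | zero => exact .nil _
  | succ n ih =>
    rw [List.ofFn_succ, List.flatten_cons]
    exact path_append V (h 0) (ih (fun i => s i.succ) (fun i => f i.succ) (fun i => h i.succ))

end LPSProof

/-- Lemma: `Reach(σ) = Reach(π₀π₁⋯πₙ) + ∑ᵢ Reach(χᵢ*)`.
For a linear path scheme `σ = π₀ χ₁* π₁ ⋯ χₙ* πₙ` from `p` to `r` over a
continuous VASS of dimension `d` (ℚ-semantics), the reachability set of `σ`
from `p(0)` is the Minkowski sum of the reachability set of the concatenated
path `π₀ π₁ ⋯ πₙ` and the reachability sets of the iterated cycles `χᵢ*`. -/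
theorem lps_reach_eq_minkowski_sum {d : ℕ} (V : CVASS d) (p r : V.Q) (n : ℕ)
    (s : Fin (n + 2) → V.Q) (πs : Fin (n + 1) → List (V.Q × V.Q))
    (χs : Fin n → List (V.Q × V.Q))
    (hs0 : s 0 = p) (hsl : s (Fin.last (n + 1)) = r)
    (hπs : ∀ i : Fin (n + 1), V.PathFrom (s i.castSucc) (πs i) (s i.succ))
    (hχs : ∀ i : Fin n, V.PathFrom (s i.succ.castSucc) (χs i) (s i.succ.castSucc) ∧
      χs i ≠ []) :
    {y : Fin d → ℚ | ∃ ks : Fin n → ℕ, V.RunFrom p 0 (lpsConcat πs χs ks) r y} =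
      {y : Fin d → ℚ | V.RunFrom p 0 (List.ofFn πs).flatten r y} +
      ∑ i : Fin n,
        {y : Fin d → ℚ | ∃ k : ℕ,
          V.RunFrom (s i.succ.castSucc) 0 ((List.replicate k (χs i)).flatten)
            (s i.succ.castSucc) y} := by
  subst hs0 hsl
  have hp : ∀ ks : Fin n → ℕ, V.PathFrom (s 0) (lpsConcat πs χs ks) (s (Fin.last (n + 1))) := by
    intro ks
    refine LPSProof.path_append V (hπs 0) ?_
    exact LPSProof.path_ofFn V (fun i => s i.succ) _
      (fun i => LPSProof.path_append V (LPSProof.path_rep V (hχs i).1 _) (hπs i.succ))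
  have hW : ∀ ks : Fin n → ℕ, LPSProof.W V (lpsConcat πs χs ks) =
      LPSProof.W V (List.ofFn πs).flatten +
        ∑ i, LPSProof.W V (List.replicate (ks i) (χs i)).flatten := by
    intro ks
    simp only [lpsConcat, LPSProof.W_append, LPSProof.W_flatten_ofFn, Finset.sum_add_distrib]
    rw [Fin.sum_univ_succ, add_assoc, add_comm (∑ i, LPSProof.W V (List.replicate _ _).flatten)]
  have hp0 := LPSProof.path_ofFn V s πs hπs
  have hc := fun i k => LPSProof.path_rep V (hχs i).1 k
  ext y
  simp only [LPSProof.run_iff, hp, hp0, hc, hW, true_and, sub_zero, Set.mem_setOf_eq, Set.mem_add,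
    Set.mem_fintype_sum]
  constructor
  · rintro ⟨ks, a, ha, b, ⟨g, hg, rfl⟩, rfl⟩
    exact ⟨a, ha, _, ⟨g, fun i => ⟨ks i, hg i⟩, rfl⟩, rfl⟩
  · rintro ⟨a, ha, b, ⟨g, hg, rfl⟩, rfl⟩
    choose ks hks using hg
    exact ⟨ks, a, ha, _, ⟨g, hks, rfl⟩, rfl⟩
end

section
/- Let V = (Q, T, ℓ) be a continuous VASS of dimension d, let x, y ∈ ℚ_{≥0}^d, and let π be a path with p(x) →^π q(y) in the nonnegative semantics. Then there exists a linear path scheme σ = π₀χ₁*π₁⋯χₙ*πₙ over V such that: n ≤ |T| + d; every π_i is a simple path; every χ_i is a simple cycle; and there exist y' ∈ ℚ_{≥0}^d and a path τ ∈ σ with ⟦π⟧ = ⟦τ⟧ and p(x) →^τ q(y') in the nonnegative semantics. (Lemma: short covering LPS for nonnegative runs.) -/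
open Pointwise

namespace CVASS

variable {d : ℕ} (V : CVASS d)

/-- Combinatorial enabledness. -/
def En : Set (Fin d) → List (V.Q × V.Q) → Prop
  | _, [] => True
  | A, t :: τ => (∀ i, V.label t i < 0 → i ∈ A) ∧ En (A ∪ {i | 0 < V.label t i}) τ

inductive LPS : V.Q → List (V.Q × V.Q) → List (List (V.Q × V.Q) × List (V.Q × V.Q)) → V.Q → Prop
  | one {p P q} : V.PathFrom p P q → SimplePath p P → LPS p P [] q
  | cons {p P r χ P' L q} : V.PathFrom p P r → SimplePath p P → V.PathFrom r χ r →
      SimpleCycle χ → LPS r P' L q → LPS p P ((χ, P') :: L) q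

/-- The word of the tail. -/
def wd {Q : Type} (L : List (List (Q × Q) × List (Q × Q))) : List (Q × Q) :=
  (L.map fun c => c.1 ++ c.2).flatten

variable {V}

theorem NNRunFrom.start {p q : V.Q} {x y π} (h : V.NNRunFrom p x π q y) : ∀ i, 0 ≤ x i := by
  cases h <;> assumption

theorem NNRunFrom.fin_nonneg {p q : V.Q} {x y π} (h : V.NNRunFrom p x π q y) : ∀ i, 0 ≤ y i := by
  induction h <;> assumption

theorem NNRunFrom.en {p q : V.Q} {x y π} (h : V.NNRunFrom p x π q y) :
    ∀ A : Set (Fin d), (∀ i, 0 < x i → i ∈ A) → V.En A π := by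
  induction h with
  | nil => intros; trivial
  | @cons p q r x y α rest ht hx h0 h1 hr ih =>
    intro A hA
    refine ⟨fun i hi => hA i ?_, ih _ fun i hi => ?_⟩
    · have := hr.start i
      simp at this
      nlinarith [mul_neg_of_pos_of_neg h0 hi]
    · simp at hi
      by_cases hxi : 0 < x i
      · exact Or.inl (hA i hxi)
      · right
        by_contra hl
        simp at hl
        nlinarith [mul_nonpos_of_nonneg_of_nonpos h0.le hl]

theorem exists_small (x l : Fin d → ℚ) : ∃ α : ℚ, 0 < α ∧ α ≤ 1 ∧ ∀ i, 0 < x i → 0 < x i + α * l i := by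
  have key : ∀ s : Finset (Fin d), ∃ α : ℚ, 0 < α ∧ α ≤ 1 ∧ ∀ i ∈ s, 0 < x i → 0 < x i + α * l i := by
    intro s
    induction s using Finset.induction_on with
    | empty => exact ⟨1, by norm_num, le_rfl, by simp⟩
    | insert a s ha ih =>
      obtain ⟨α, h0, h1, h⟩ := ih
      have mono : ∀ (i : Fin d) (α β : ℚ), 0 < β → β ≤ α → 0 < x i → 0 < x i + α * l i → 0 < x i + β * l i := by
        intro i α β hb hba hx h
        rcases le_or_gt 0 (l i) with hl | hl
        · positivity
        · nlinarith
      have hpos : 0 < |l a| + 1 := by positivity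
      by_cases hxa : 0 < x a
      · refine ⟨min α (x a / (|l a| + 1)), lt_min h0 (by positivity), (min_le_left _ _).trans h1, ?_⟩
        intro i hi hx
        have hmin : 0 < min α (x a / (|l a| + 1)) := lt_min h0 (by positivity)
        rcases Finset.mem_insert.1 hi with rfl | hi
        · refine mono _ _ _ hmin (min_le_right _ _) hx ?_
          have : x i / (|l i| + 1) * (|l i| + 1) = x i := by field_simp
          have h2 : 0 < x i / (|l i| + 1) := by positivity
          nlinarith [neg_abs_le (l i)]
        · exact mono _ _ _ hmin (min_le_left _ _) hx (h i hi hx)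
      · refine ⟨α, h0, h1, fun i hi hx => ?_⟩
        rcases Finset.mem_insert.1 hi with rfl | hi
        · exact absurd hx hxa
        · exact h i hi hx
  obtain ⟨α, h0, h1, h⟩ := key Finset.univ
  exact ⟨α, h0, h1, fun i => h i (Finset.mem_univ i)⟩

theorem En.run {p q : V.Q} {π} (h : V.PathFrom p π q) : ∀ (A : Set (Fin d)) (x : Fin d → ℚ),
    (∀ i, 0 ≤ x i) → (∀ i ∈ A, 0 < x i) → V.En A π → ∃ y, V.NNRunFrom p x π q y := by
  induction h with
  | nil p => intro A x hx _ _; exact ⟨x, .nil p x hx⟩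
  | @cons p q r rest ht hr ih =>
    rintro A x hx hA ⟨h1, h2⟩
    obtain ⟨α, ha0, ha1, ha⟩ := exists_small x (V.label (p, q))
    have hn : ∀ i, 0 ≤ V.label (p, q) i ∨ 0 < x i := fun i =>
      (le_or_gt 0 (V.label (p, q) i)).imp id (fun h => hA i (h1 i h))
    have g1 : ∀ i, 0 ≤ (x + α • V.label (p, q)) i := by
      intro i
      simp
      rcases hn i with h | h
      · have := hx i
        positivity
      · exact (ha i h).le
    have g2 : ∀ i ∈ A ∪ {i | 0 < V.label (p, q) i}, 0 < (x + α • V.label (p, q)) i := by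
      intro i hi
      simp
      rcases hi with hi | hi
      · exact ha i (hA i hi)
      · have := hx i
        have : 0 < V.label (p, q) i := hi
        positivity
    obtain ⟨y, hy⟩ := ih _ (x + α • V.label (p, q)) g1 g2 h2
    exact ⟨y, .cons ht hx ha0 ha1 hy⟩

theorem PathFrom.append {p q r : V.Q} {a b} (h : V.PathFrom p a q) (h' : V.PathFrom q b r) :
    V.PathFrom p (a ++ b) r := by
  induction h with
  | nil => exact h'
  | cons ht _ ih => exact .cons ht (ih h')

theorem PathFrom.mem_T {p q : V.Q} {a} (h : V.PathFrom p a q) : ∀ t ∈ a, t ∈ V.T := by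
  induction h with
  | nil => simp
  | cons ht _ ih => intro t h; rcases List.mem_cons.1 h with rfl | h; exacts [ht, ih t h]

/-- Split a path at a visited state. -/
theorem PathFrom.split {p q v : V.Q} {P} (h : V.PathFrom p P q) : v ∈ P.map Prod.snd →
    ∃ b a, P = b ++ a ∧ b ≠ [] ∧ V.PathFrom p b v ∧ V.PathFrom v a q ∧ ∃ b', b.map Prod.snd = b' ++ [v] := by
  induction h with
  | nil => simp
  | @cons p r q rest ht hr ih =>
    intro hv
    by_cases hvr : v = r
    · subst hvr
      exact ⟨[(p, v)], rest, rfl, by simp, .cons ht (.nil _), hr, [], rfl⟩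
    · have : v ∈ rest.map Prod.snd := by simpa [hvr] using hv
      obtain ⟨b, a, rfl, hb, h1, h2, b', h3⟩ := ih this
      exact ⟨(p, r) :: b, a, rfl, by simp, .cons ht h1, h2, r :: b', by simp [h3]⟩

theorem En.drop {A : Set (Fin d)} : ∀ {b a : List (V.Q × V.Q)}, (∀ t ∈ b, ∀ i, 0 < V.label t i → i ∈ A) →
    V.En A (b ++ a) → V.En A a := by
  intro b
  induction b with
  | nil => intro a _ h; exact h
  | cons t b ih =>
    intro a hb h
    have : A ∪ {i | 0 < V.label t i} = A :=
      Set.union_eq_left.2 fun i hi => hb t (by simp) i hi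
    have h2 := h.2
    rw [this] at h2
    exact ih (fun t ht => hb t (by simp [ht])) h2

theorem LPS.first {p q : V.Q} {P L} (h : V.LPS p P L q) : ∃ r, V.PathFrom p P r ∧ SimplePath p P ∧
    ∀ p' P', V.PathFrom p' P' r → SimplePath p' P' → V.LPS p' P' L q := by
  cases h with
  | one h1 h2 => exact ⟨q, h1, h2, fun p' P' h1 h2 => .one h1 h2⟩
  | cons h1 h2 h3 h4 h5 => exact ⟨_, h1, h2, fun p' P' h1 h2 => .cons h1 h2 h3 h4 h5⟩

theorem main {p q : V.Q} {π} (h : V.PathFrom p π q) : ∀ (S : Finset (V.Q × V.Q)) (A : Set (Fin d)),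
    (∀ t ∈ S, ∀ i, 0 < V.label t i → i ∈ A) → V.En A π →
    ∃ P L, V.LPS p P L q ∧ V.En A (P ++ wd L) ∧ (∀ t ∈ P ++ wd L, t ∈ π) ∧
      (∀ t ∈ π, t ∈ S ∨ t ∈ P ++ wd L) ∧
      L.length ≤ (((wd L).toFinset \ S) \ P.toFinset).card := by
  induction h with
  | nil p => 
    intro S A _ _
    exact ⟨[], [], .one (.nil p) (by simp [SimplePath, pathStates]), trivial, by simp [wd], by simp, by simp⟩
  | @cons p u q rest ht hr ih =>
    rintro S A hS ⟨he1, he2⟩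
    obtain ⟨P, L, hL, hE, hsub, hsup, hcard⟩ := ih (insert (p, u) S) _ (by
      intro t ht i hi
      rcases Finset.mem_insert.1 ht with rfl | ht
      · exact Or.inr hi
      · exact Or.inl (hS t ht i hi)) he2
    obtain ⟨r, hP, hPs, hext⟩ := hL.first
    have hEn : V.En A ((p, u) :: (P ++ wd L)) := ⟨he1, hE⟩
    by_cases hs : SimplePath p ((p, u) :: P)
    · refine ⟨(p, u) :: P, L, hext _ _ (.cons ht hP) hs, hEn, ?_, ?_, ?_⟩
      · grind
      · grind
      · convert hcard using 2
        ext t; simp; tauto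
    have hp : p ∈ u :: P.map Prod.snd := by
      by_contra hp
      exact hs (by simpa [SimplePath, pathStates] using ⟨by simpa using hp, by simpa [SimplePath, pathStates] using hPs⟩)
    obtain ⟨b, a, hba, hb1, hb2, hb3, hb4⟩ := (PathFrom.cons ht hP).split (v := p) (by simpa using hp)
    obtain ⟨t', b, rfl⟩ := List.exists_cons_of_ne_nil hb1
    simp only [List.cons_append, List.cons.injEq] at hba
    obtain ⟨rfl, rfl⟩ := hba
    have hnd : (((p, u) :: b).map Prod.snd ++ a.map Prod.snd).Nodup := by
      simpa [SimplePath, pathStates] using hPs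
    have hcyc : SimpleCycle ((p, u) :: b) := ⟨by simp, (List.nodup_append.1 hnd).1⟩
    have ha : SimplePath p a := by
      obtain ⟨b', hb'⟩ := hb4
      rw [hb'] at hnd
      simp only [SimplePath, pathStates]
      rw [List.append_assoc] at hnd
      exact (List.nodup_append.1 hnd).2.1
    by_cases hin : ∀ t ∈ (p, u) :: b, t ∈ S
    · refine ⟨a, L, hext _ _ hb3 ha, ?_, ?_, ?_, ?_⟩
      · refine En.drop (b := (p, u) :: b) (fun t ht => hS t (hin t ht)) ?_
        simpa using hEn
      · grind
      · grind
      · refine hcard.trans (Finset.card_le_card ?_)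
        intro t; simp; tauto
    · push Not at hin
      obtain ⟨t, htm, htS⟩ := hin
      refine ⟨[], ((p, u) :: b, a) :: L, .cons (.nil p) (by simp [SimplePath, pathStates]) hb2 hcyc (hext _ _ hb3 ha), ?_, ?_, ?_, ?_⟩
      · simpa [wd] using hEn
      · simp only [wd, List.map_cons, List.flatten_cons] at *
        grind
      · simp only [wd, List.map_cons, List.flatten_cons] at *
        grind
      · have hlt := Finset.card_lt_card (s := ((wd L).toFinset \ insert (p, u) S) \ (b ++ a).toFinset)
          (t := ((wd (((p, u) :: b, a) :: L)).toFinset \ S) \ [].toFinset) (by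
          rw [Finset.ssubset_iff_of_subset]
          · refine ⟨t, ?_, ?_⟩
            · simp only [wd, List.map_cons, List.flatten_cons, Finset.mem_sdiff, List.mem_toFinset,
                List.mem_append, List.toFinset_nil, Finset.notMem_empty]
              exact ⟨⟨Or.inl (Or.inl htm), htS⟩, not_false⟩
            · simp only [Finset.mem_sdiff, List.mem_toFinset, List.mem_append, Finset.mem_insert]
              rintro ⟨⟨_, h1⟩, h2⟩
              rcases List.mem_cons.1 htm with h | h
              · exact h1 (Or.inl h)
              · exact h2 (Or.inl h)
          · intro t
            simp only [wd, List.map_cons, List.flatten_cons, Finset.mem_sdiff, List.mem_toFinset,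
                List.mem_append, List.toFinset_nil, Finset.notMem_empty, Finset.mem_insert]
            rintro ⟨⟨h0, h1⟩, h2⟩
            exact ⟨⟨Or.inr h0, fun h => h1 (Or.inr h)⟩, not_false⟩)
        simp only [List.length_cons]
        omega

theorem LPS.path {p q : V.Q} {P L} (h : V.LPS p P L q) : V.PathFrom p (P ++ wd L) q := by
  induction h with
  | one h => simpa [wd] using h
  | cons h1 h2 h3 h4 h5 ih =>
    have := h1.append (h3.append ih)
    simpa [wd] using this

theorem LPS.toFin {p q : V.Q} {P L} (h : V.LPS p P L q) :
    ∃ (n : ℕ) (s : Fin (n + 2) → V.Q) (πs : Fin (n + 1) → List (V.Q × V.Q))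
      (χs : Fin n → List (V.Q × V.Q)),
      n = L.length ∧
      s 0 = p ∧ s (Fin.last (n + 1)) = q ∧
      (∀ i : Fin (n + 1), V.PathFrom (s i.castSucc) (πs i) (s i.succ)) ∧
      (∀ i : Fin (n + 1), SimplePath (s i.castSucc) (πs i)) ∧
      (∀ i : Fin n, V.PathFrom (s i.succ.castSucc) (χs i) (s i.succ.castSucc)) ∧
      (∀ i : Fin n, SimpleCycle (χs i)) ∧ lpsConcat πs χs (fun _ => 1) = P ++ wd L := by
  induction h with
  | @one p P q h1 h2 =>
    refine ⟨0, ![p, q], ![P], ![], rfl, rfl, rfl, ?_, ?_, by simp, by simp, by simp [lpsConcat, wd]⟩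
    · intro i; obtain rfl : i = 0 := Fin.fin_one_eq_zero i; exact h1
    · intro i; obtain rfl : i = 0 := Fin.fin_one_eq_zero i; exact h2
  | @cons p P r χ P' L q h1 h2 h3 h4 h5 ih =>
    obtain ⟨n, s, πs, χs, rfl, rfl, hq, a1, a2, a3, a4, a5⟩ := ih
    refine ⟨L.length + 1, Fin.cons p s, Fin.cons P πs, Fin.cons χ χs, rfl, rfl, ?_, ?_, ?_, ?_, ?_, ?_⟩
    · rw [← Fin.succ_last, Fin.cons_succ, hq]
    · intro i
      refine Fin.cases ?_ (fun i => ?_) i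
      · exact h1
      · rw [← Fin.succ_castSucc]; simpa using a1 i
    · intro i
      refine Fin.cases ?_ (fun i => ?_) i
      · exact h2
      · rw [← Fin.succ_castSucc]; simpa using a2 i
    · intro i
      refine Fin.cases ?_ (fun i => ?_) i
      · exact h3
      · rw [← Fin.succ_castSucc]; simpa using a3 i
    · intro i
      refine Fin.cases ?_ (fun i => ?_) i
      · exact h4
      · simpa using a4 i
    · simp [lpsConcat, wd, List.ofFn_succ] at a5 ⊢
      rw [a5]

end CVASS

/-- short covering LPS for nonnegative runs.
If `p(x) →^π q(y)` in the nonnegative semantics, then there is a linear path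
scheme `σ = π₀ χ₁* π₁ ⋯ χₙ* πₙ` from `p` to `q` with `n ≤ |T| + d`, simple
paths and simple cycles, and some `y' ∈ ℚ≥0^d` and path `τ ∈ σ` with
`⟦π⟧ = ⟦τ⟧` and `p(x) →^τ q(y')` in the nonnegative semantics. -/
theorem short_covering_lps_nonneg {d : ℕ} (V : CVASS d) (p q : V.Q)
    (x y : Fin d → ℚ) (hx : ∀ i, 0 ≤ x i) (hy : ∀ i, 0 ≤ y i)
    (π : List (V.Q × V.Q)) (hπ : V.PathFrom p π q)
    (hrun : V.NNRunFrom p x π q y) :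
    ∃ (n : ℕ) (s : Fin (n + 2) → V.Q) (πs : Fin (n + 1) → List (V.Q × V.Q))
      (χs : Fin n → List (V.Q × V.Q)),
      n ≤ V.T.card + d ∧
      s 0 = p ∧ s (Fin.last (n + 1)) = q ∧
      (∀ i : Fin (n + 1), V.PathFrom (s i.castSucc) (πs i) (s i.succ)) ∧
      (∀ i : Fin (n + 1), SimplePath (s i.castSucc) (πs i)) ∧
      (∀ i : Fin n, V.PathFrom (s i.succ.castSucc) (χs i) (s i.succ.castSucc)) ∧
      (∀ i : Fin n, SimpleCycle (χs i)) ∧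
      ∃ (y' : Fin d → ℚ) (ks : Fin n → ℕ),
        (∀ i, 0 ≤ y' i) ∧
        (∀ t : V.Q × V.Q, t ∈ π ↔ t ∈ lpsConcat πs χs ks) ∧
        V.NNRunFrom p x (lpsConcat πs χs ks) q y' := by
  obtain ⟨P, L, hL, hE, hsub, hsup, hcard⟩ := CVASS.main hπ ∅ {i | 0 < x i} (by simp)
    (hrun.en _ fun i hi => hi)
  obtain ⟨y', hy'⟩ := CVASS.En.run hL.path _ x hx (fun i hi => hi) hE
  obtain ⟨n, s, πs, χs, rfl, h1, h2, h3, h4, h5, h6, h7⟩ := hL.toFin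
  refine ⟨L.length, s, πs, χs, ?_, h1, h2, h3, h4, h5, h6, y', fun _ => 1, hy'.fin_nonneg, ?_, ?_⟩
  · refine (hcard.trans (Finset.card_le_card (t := V.T) ?_)).trans (Nat.le_add_right _ _)
    intro t ht
    refine hL.path.mem_T t ?_
    simp at ht ⊢
    exact Or.inr ht.1
  · intro t
    rw [h7]
    exact ⟨fun h => (hsup t h).resolve_left (by simp), hsub t⟩
  · rw [h7]; exact hy'
end
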